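/- Weighted C² bound for eigenfunctions of the linearized operator: let λ ∈ ℝ and let ξ: ℝⁿ → (n×n skew-symmetric real matrices)ⁿ be a smooth map satisfying −Lξ = λξ pointwise and ∫_{ℝⁿ} (‖ξ(y)‖_F² + Σ_{i,j} ‖∂_i ξ_j(y)‖_F²)·e^{−|y|²/4} dy < ∞. Then for every α ∈ (0,1) there exists a constant C (depending on ξ, λ, α, n) such that for all y ∈ ℝⁿ, with r̃(y) = max(1, |y|): ‖ξ(y)‖_F ≤ C·r̃(y)^{2λ−1}, ‖∇ξ(y)‖ ≤ C·r̃(y)^{2λ−2}, ‖∇²ξ(y)‖ ≤ C·r̃(y)^{2λ−3}, and moreover the α-Hölder seminorm of ∇²ξ on the unit ball around y is at most C·r̃(y)^{2λ−3−α}. -/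

import Mathlib

open scoped BigOperators

noncomputable section

/-- Euclidean space `ℝⁿ`. -/
abbrev En (n : ℕ) := EuclideanSpace ℝ (Fin n)

/-- `n × n` real matrices, represented entrywise. -/
abbrev Mat (n : ℕ) := Fin n → Fin n → ℝ

variable {n : ℕ}

/-- Frobenius inner product `⟨A,B⟩_F = tr(AᵀB) = Σ_{μν} A_{μν} B_{μν}`. -/
def fipE (A B : Mat n) : ℝ := ∑ μ, ∑ ν, A μ ν * B μ ν

/-- Frobenius norm. -/
def fnormE (A : Mat n) : ℝ := Real.sqrt (fipE A A)

/-- Matrix commutator `[A, B] = AB − BA`, entrywise. -/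
def brkt (A B : Mat n) : Mat n := fun μ ν => ∑ k, (A μ k * B k ν - B μ k * A k ν)

/-- `A` is skew-symmetric. -/
def skewM (A : Mat n) : Prop := ∀ μ ν, A ν μ = -A μ ν

/-- Partial derivative `∂_i f` of a scalar function on `ℝⁿ`. -/
def pder (i : Fin n) (f : En n → ℝ) (y : En n) : ℝ :=
  fderiv ℝ f y (EuclideanSpace.single i 1)

/-- Euclidean Laplacian `Δf = Σ_i ∂_i ∂_i f` of a scalar function on `ℝⁿ`. -/
def lapS (f : En n → ℝ) (y : En n) : ℝ := ∑ i, pder i (fun z => pder i f z) y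

/-- Componentwise partial derivative `∂_i u` of a matrix-valued function on `ℝⁿ`. -/
def pderM (i : Fin n) (u : En n → Mat n) (y : En n) : Mat n :=
  fun μ ν => pder i (fun z => u z μ ν) y

/-- Componentwise Laplacian `Δu` of a matrix-valued function on `ℝⁿ`. -/
def lapM (u : En n → Mat n) (y : En n) : Mat n := fun μ ν => lapS (fun z => u z μ ν) y

/-- The constant `a = √(n−2)/(2√2)`. -/
def aC (n : ℕ) : ℝ := Real.sqrt ((n : ℝ) - 2) / (2 * Real.sqrt 2)

/-- The constant `b = (1/2)(6n − 12 − (n+2)√(2n−4))`. -/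
def bC (n : ℕ) : ℝ := (1 / 2) * (6 * (n : ℝ) - 12 - ((n : ℝ) + 2) * Real.sqrt (2 * (n : ℝ) - 4))

/-- `σ_i(y)`, the skew matrix with entries `(σ_i(y))^μ_ν = δ_{iν} y^μ − δ_{iμ} y^ν`. -/
def sigmaM (i : Fin n) (y : En n) : Mat n :=
  fun μ ν => (if i = ν then y μ else 0) - (if i = μ then y ν else 0)

/-- The soliton connection `W_i(y) = σ_i(y)/(a|y|² + b)`. -/
def Wc (i : Fin n) (y : En n) : Mat n :=
  fun μ ν => sigmaM i y μ ν / (aC n * ‖y‖ ^ 2 + bC n)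

/-- The curvature `F_{ij} = ∂_i W_j − ∂_j W_i + [W_i, W_j]` of the soliton connection `W`. -/
def Fc (i j : Fin n) (y : En n) : Mat n :=
  pderM i (Wc j) y - pderM j (Wc i) y + brkt (Wc i y) (Wc j y)

/-- The linearized operator `L` of the rescaled Yang–Mills de Turck flow at the soliton `W`:
`(Lu)_j = Δu_j − (1/2)Σ_i y_i ∂_i u_j − (1/2)u_j + 2Σ_i [W_i, ∂_i u_j]
  + Σ_i [W_i, [W_i, u_j]] + 2Σ_i [u_i, F_{ij}]`. -/
def Lop (u : En n → Fin n → Mat n) (y : En n) (j : Fin n) : Mat n :=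
  lapM (fun z => u z j) y
    - (1 / 2 : ℝ) • (∑ i, y i • pderM i (fun z => u z j) y)
    - (1 / 2 : ℝ) • u y j
    + (2 : ℝ) • ∑ i, brkt (Wc i y) (pderM i (fun z => u z j) y)
    + ∑ i, brkt (Wc i y) (brkt (Wc i y) (u y j))
    + (2 : ℝ) • ∑ i, brkt (u y i) (Fc i j y)

/-- Squared Frobenius norm of a tuple of matrices: `‖u‖_F² = Σ_j ‖u_j‖_F²`. -/
def tnormSq (v : Fin n → Mat n) : ℝ := ∑ j, fipE (v j) (v j)

/-- The Gaussian weight `ρ(y) = e^{−|y|²/4}`. -/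
def gauss (y : En n) : ℝ := Real.exp (-‖y‖ ^ 2 / 4)

end

/-!
Write `τ = 1 + |y|²`. Entrywise, the eigenvalue equation is a system
`(Δ - ½ y·∇ + c) u = B·∇u + V u` with `c = λ - 1/2`, whose coefficients are symbols of order
`-1/2` and `-1` in `τ`. Since `(Δ - ½ y·∇ + c) τ ^ c = O(τ ^ (c - 1))`, small perturbations of
`τ ^ c` are barriers at infinity for `|u|`; the competing growth rate `exp (|y|² / 4)` is excluded
by the Gaussian integrability through a mean value inequality. A Bernstein estimate improves this
to a bound on `∇u`, and the gradient solves a system of the same kind with `c` lowered by `1/2`, so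
that induction makes `u` a symbol of order `c`.
-/

open Metric Set Filter Topology MeasureTheory Real
open scoped ContDiff

section Calculus

variable {n : ℕ} {ι : Type*} {f g : En n → ℝ} {y : En n}

@[fun_prop]
theorem contDiff_two_of_infty (hf : ContDiff ℝ ∞ f) : ContDiff ℝ 2 f :=
  hf.of_le ENat.LEInfty.out

@[fun_prop]
theorem differentiableAt_of_contDiff_two (hf : ContDiff ℝ 2 f) : DifferentiableAt ℝ f y :=
  hf.differentiable two_ne_zero y

@[fun_prop]
theorem contDiff_norm_sq_infty : ContDiff ℝ ∞ fun y : En n => ‖y‖ ^ 2 :=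
  contDiff_norm_sq ℝ

@[fun_prop]
theorem contDiff_pder (hf : ContDiff ℝ ∞ f) (i : Fin n) : ContDiff ℝ ∞ fun y => pder i f y :=
  (hf.fderiv_right (m := ∞) le_rfl).clm_apply contDiff_const

@[fun_prop]
theorem differentiableAt_pder (hf : ContDiff ℝ 2 f) (i : Fin n) :
    DifferentiableAt ℝ (fun y => pder i f y) y :=
  ((hf.fderiv_right (m := 1) le_rfl).clm_apply contDiff_const).differentiable one_ne_zero y

@[fun_prop]
theorem contDiff_lapS (hf : ContDiff ℝ ∞ f) : ContDiff ℝ ∞ fun y => lapS f y := by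
  unfold lapS
  fun_prop

theorem fderiv_apply_eq_sum_pder (f : En n → ℝ) (y v : En n) :
    fderiv ℝ f y v = ∑ i, v i * pder i f y := by
  conv_lhs => rw [← (EuclideanSpace.basisFun (Fin n) ℝ).sum_repr v]
  simp [pder]

theorem pder_const (i : Fin n) (c : ℝ) (y : En n) : pder i (fun _ => c) y = 0 := by
  simp [pder]

theorem pder_coord (i j : Fin n) (y : En n) :
    pder i (fun y => y j) y = if j = i then 1 else 0 := by
  change fderiv ℝ (EuclideanSpace.proj j : En n →L[ℝ] ℝ) y (EuclideanSpace.single i 1) = _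
  rw [ContinuousLinearMap.fderiv]
  simp

theorem pder_add (hf : DifferentiableAt ℝ f y) (hg : DifferentiableAt ℝ g y) (i : Fin n) :
    pder i (fun z => f z + g z) y = pder i f y + pder i g y := by
  simp [pder, fderiv_fun_add hf hg]

theorem pder_sub (hf : DifferentiableAt ℝ f y) (hg : DifferentiableAt ℝ g y) (i : Fin n) :
    pder i (fun z => f z - g z) y = pder i f y - pder i g y := by
  simp [pder, fderiv_fun_sub hf hg]

theorem pder_mul (hf : DifferentiableAt ℝ f y) (hg : DifferentiableAt ℝ g y) (i : Fin n) :
    pder i (fun z => f z * g z) y = pder i f y * g y + f y * pder i g y := by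
  simp only [pder, fderiv_fun_mul hf hg, add_apply, smul_apply, smul_eq_mul]
  ring

theorem pder_const_mul (hf : DifferentiableAt ℝ f y) (c : ℝ) (i : Fin n) :
    pder i (fun z => c * f z) y = c * pder i f y := by
  rw [pder_mul (differentiableAt_const c) hf, pder_const, zero_mul, zero_add]

theorem pder_sum {s : Finset ι} {u : ι → En n → ℝ} (hu : ∀ a, DifferentiableAt ℝ (u a) y)
    (i : Fin n) : pder i (fun z => ∑ a ∈ s, u a z) y = ∑ a ∈ s, pder i (u a) y := by
  simp [pder, fderiv_fun_sum fun a _ => hu a]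

theorem pder_comp {φ : ℝ → ℝ} {φ' : ℝ} (hφ : HasDerivAt φ φ' (f y))
    (hf : DifferentiableAt ℝ f y) (i : Fin n) :
    pder i (fun z => φ (f z)) y = φ' * pder i f y := by
  have h := (hφ.comp_hasFDerivAt y hf.hasFDerivAt).fderiv
  simp only [Function.comp_def] at h
  simp [pder, h]

theorem pder_comm (hf : ContDiff ℝ 2 f) (i j : Fin n) (y : En n) :
    pder i (fun z => pder j f z) y = pder j (fun z => pder i f z) y := by
  have hd : DifferentiableAt ℝ (fderiv ℝ f) y :=
    (hf.fderiv_right (m := 1) le_rfl).differentiable one_ne_zero y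
  have key (v w : En n) :
      fderiv ℝ (fun z => fderiv ℝ f z v) y w = fderiv ℝ (fderiv ℝ f) y w v := by
    simp [fderiv_clm_apply hd (differentiableAt_const v)]
  have hsymm : IsSymmSndFDerivAt ℝ f y := hf.contDiffAt.isSymmSndFDerivAt (by simp)
  unfold pder
  rw [key, key]
  exact hsymm _ _

theorem lapS_add (hf : ContDiff ℝ 2 f) (hg : ContDiff ℝ 2 g) (y : En n) :
    lapS (fun z => f z + g z) y = lapS f y + lapS g y := by
  simp (disch := fun_prop) only [lapS, pder_add, Finset.sum_add_distrib]

theorem lapS_sub (hf : ContDiff ℝ 2 f) (hg : ContDiff ℝ 2 g) (y : En n) :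
    lapS (fun z => f z - g z) y = lapS f y - lapS g y := by
  simp (disch := fun_prop) only [lapS, pder_sub, Finset.sum_sub_distrib]

theorem lapS_mul (hf : ContDiff ℝ 2 f) (hg : ContDiff ℝ 2 g) (y : En n) :
    lapS (fun z => f z * g z) y
      = lapS f y * g y + 2 * (∑ i, pder i f y * pder i g y) + f y * lapS g y := by
  simp (disch := fun_prop) only [lapS, pder_mul, pder_add, Finset.sum_add_distrib,
    ← Finset.sum_mul, ← Finset.mul_sum]
  ring

theorem lapS_sum {s : Finset ι} {u : ι → En n → ℝ} (hu : ∀ a, ContDiff ℝ 2 (u a)) (y : En n) :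
    lapS (fun z => ∑ a ∈ s, u a z) y = ∑ a ∈ s, lapS (u a) y := by
  simp (disch := fun_prop) only [lapS, pder_sum]
  exact Finset.sum_comm

theorem lapS_pder (hf : ContDiff ℝ ∞ f) (k : Fin n) (y : En n) :
    lapS (fun z => pder k f z) y = pder k (fun z => lapS f z) y := by
  simp (disch := fun_prop) only [lapS, pder_sum, pder_comm _ _ k]

theorem sum_coord_sq (y : En n) : ∑ i, y i ^ 2 = ‖y‖ ^ 2 :=
  (EuclideanSpace.real_norm_sq_eq y).symm

theorem abs_coord_le_norm (y : En n) (i : Fin n) : |y i| ≤ ‖y‖ :=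
  PiLp.norm_apply_le y i

theorem pder_norm_sq (i : Fin n) (y : En n) : pder i (fun y => ‖y‖ ^ 2) y = 2 * y i := by
  simp_rw [← sum_coord_sq, sq]
  simp (disch := fun_prop) only [pder_sum, pder_mul, pder_coord]
  simp [Finset.sum_add_distrib, two_mul]

theorem deriv_deriv_nonpos_of_isLocalMax {φ : ℝ → ℝ} {t : ℝ} (hφ : ContinuousAt φ t)
    (h : IsLocalMax φ t) : deriv (deriv φ) t ≤ 0 := by
  by_contra! hpos
  have hmin := isLocalMin_of_deriv_deriv_pos hpos h.deriv_eq_zero hφ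
  have hconst : φ =ᶠ[𝓝 t] fun _ => φ t := by
    filter_upwards [h, hmin] with x using le_antisymm
  have hzero := hconst.deriv.deriv_eq
  simp only [deriv_const'] at hzero
  exact hpos.ne' hzero

theorem pder_eq_zero_of_isLocalMax (h : IsLocalMax f y) (i : Fin n) : pder i f y = 0 := by
  simp [pder, h.fderiv_eq_zero]

theorem hasDerivAt_line {v : En n} {t : ℝ} (hf : DifferentiableAt ℝ f (y + t • v)) :
    HasDerivAt (fun s : ℝ => f (y + s • v)) (fderiv ℝ f (y + t • v) v) t := by
  have hline : HasDerivAt (fun s : ℝ => y + s • v) v t := by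
    simpa using ((hasDerivAt_id t).smul_const v).const_add y
  exact hf.hasFDerivAt.comp_hasDerivAt t hline

theorem lapS_nonpos_of_isLocalMax (hf : ContDiff ℝ 2 f) (h : IsLocalMax f y) : lapS f y ≤ 0 := by
  refine Finset.sum_nonpos fun i _ => ?_
  set e : En n := EuclideanSpace.single i 1
  have hmax : IsLocalMax (fun t : ℝ => f (y + t • e)) 0 := by
    have hc : ContinuousAt (fun t : ℝ => y + t • e) 0 := by fun_prop
    have h' : IsLocalMax f (y + (0 : ℝ) • e) := by simpa using h
    exact hc.tendsto.eventually h'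
  have hderiv : deriv (fun t : ℝ => f (y + t • e)) = fun t => pder i f (y + t • e) :=
    funext fun t => (hasDerivAt_line (by fun_prop)).deriv
  have hcont : Continuous fun t : ℝ => f (y + t • e) := hf.continuous.comp (by fun_prop)
  have hsecond := deriv_deriv_nonpos_of_isLocalMax hcont.continuousAt hmax
  rw [hderiv, (hasDerivAt_line (f := fun z => pder i f z) (by fun_prop)).deriv] at hsecond
  simp only [zero_smul, add_zero] at hsecond
  exact hsecond

end Calculus

section Tau

variable {E : Type*} [NormedAddCommGroup E]

/-- The smooth weight `τ(y) = 1 + |y|²`, in whose powers all growth rates are measured. -/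
noncomputable def tau (y : E) : ℝ := 1 + ‖y‖ ^ 2

theorem one_le_tau (y : E) : 1 ≤ tau y := by
  unfold tau
  nlinarith [sq_nonneg ‖y‖]

theorem tau_pos (y : E) : 0 < tau y :=
  one_pos.trans_le (one_le_tau y)

theorem tau_rpow_pos (p : ℝ) (y : E) : 0 < tau y ^ p :=
  rpow_pos_of_pos (tau_pos y) p

theorem tau_zero : tau (0 : E) = 1 := by
  simp [tau]

theorem norm_sq_eq_tau_sub_one (y : E) : ‖y‖ ^ 2 = tau y - 1 := by
  simp [tau]

theorem norm_le_tau_rpow_half (y : E) : ‖y‖ ≤ tau y ^ (1 / 2 : ℝ) := by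
  rw [← sqrt_eq_rpow]
  exact le_sqrt_of_sq_le (by linarith [norm_sq_eq_tau_sub_one y])

end Tau

section Symbol

variable {E F G : Type*} [NormedAddCommGroup E] [NormedSpace ℝ E] [NormedAddCommGroup F]
  [NormedSpace ℝ F] [NormedAddCommGroup G] [NormedSpace ℝ G] {k m : ℕ} {p q : ℝ} {f g : E → F}

/-- Smooth symbols of order `p` (in `τ`, hence of order `2p` in `|y|`), with estimates for the
derivatives up to order `k`: each derivative gains a factor `τ ^ (-1/2)`. -/
def IsSymbol (k : ℕ) (p : ℝ) (f : E → F) : Prop :=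
  ContDiff ℝ ∞ f ∧
    ∀ m ≤ k, ∃ C : ℝ, ∀ y, ‖iteratedFDeriv ℝ m f y‖ ≤ C * tau y ^ (p - m / 2)

namespace IsSymbol

theorem contDiff (hf : IsSymbol k p f) : ContDiff ℝ ∞ f := hf.1

theorem mono (hf : IsSymbol k p f) (hm : m ≤ k) : IsSymbol m p f :=
  ⟨hf.1, fun l hl => hf.2 l (hl.trans hm)⟩

theorem congr_order (hf : IsSymbol k p f) (h : p = q) : IsSymbol k q f :=
  h ▸ hf

theorem exists_norm_iteratedFDeriv_le (hf : IsSymbol k p f) (hm : m ≤ k) :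
    ∃ C : ℝ, 0 ≤ C ∧ ∀ y, ‖iteratedFDeriv ℝ m f y‖ ≤ C * tau y ^ (p - m / 2) := by
  obtain ⟨C, hC⟩ := hf.2 m hm
  refine ⟨C, ?_, hC⟩
  simpa [tau_zero] using (norm_nonneg _).trans (hC 0)

theorem exists_norm_le (hf : IsSymbol k p f) :
    ∃ C : ℝ, 0 ≤ C ∧ ∀ y, ‖f y‖ ≤ C * tau y ^ p := by
  simpa using hf.exists_norm_iteratedFDeriv_le k.zero_le

theorem exists_forall_norm_le {κ : Type*} [Finite κ] {u : κ → E → F}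
    (hu : ∀ a, IsSymbol k p (u a)) : ∃ C : ℝ, 0 ≤ C ∧ ∀ a y, ‖u a y‖ ≤ C * tau y ^ p := by
  have := Fintype.ofFinite κ
  choose C hC0 hC using fun a => (hu a).exists_norm_le
  refine ⟨∑ a, C a, Finset.sum_nonneg fun a _ => hC0 a, fun a y => (hC a y).trans ?_⟩
  have hle : C a ≤ ∑ a, C a := Finset.single_le_sum (fun a _ => hC0 a) (Finset.mem_univ a)
  exact mul_le_mul_of_nonneg_right hle (tau_rpow_pos p y).le

theorem of_bound (hf : ContDiff ℝ ∞ f) (hbound : ∃ C : ℝ, ∀ y, ‖f y‖ ≤ C * tau y ^ p) :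
    IsSymbol 0 p f := by
  refine ⟨hf, fun m hm => ?_⟩
  obtain rfl := Nat.le_zero.1 hm
  simpa only [norm_iteratedFDeriv_zero, Nat.cast_zero, zero_div, sub_zero] using hbound

theorem of_fderiv (hf : ContDiff ℝ ∞ f) (hbound : ∃ C : ℝ, ∀ y, ‖f y‖ ≤ C * tau y ^ p)
    (h : IsSymbol k (p - 1 / 2) (fderiv ℝ f)) : IsSymbol (k + 1) p f := by
  refine ⟨hf, fun m hm => ?_⟩
  cases m with
  | zero => simpa using hbound
  | succ m =>
    obtain ⟨C, hC⟩ := h.2 m (by lia)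
    refine ⟨C, fun y => ?_⟩
    rw [← norm_iteratedFDeriv_fderiv]
    refine (hC y).trans_eq ?_
    push_cast
    ring_nf

theorem fderiv (hf : IsSymbol (k + 1) p f) : IsSymbol k (p - 1 / 2) (fderiv ℝ f) := by
  refine ⟨hf.1.fderiv_right le_rfl, fun m hm => ?_⟩
  obtain ⟨C, hC⟩ := hf.2 (m + 1) (by lia)
  refine ⟨C, fun y => ?_⟩
  rw [norm_iteratedFDeriv_fderiv]
  refine (hC y).trans_eq ?_
  push_cast
  ring_nf

theorem zero : IsSymbol k p fun _ : E => (0 : F) :=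
  ⟨contDiff_const, fun m _ => ⟨0, fun y => by simp⟩⟩

theorem const (c : F) (hp : 0 ≤ p) : IsSymbol k p fun _ : E => c := by
  have hbound : ∃ C : ℝ, ∀ y : E, ‖c‖ ≤ C * tau y ^ p :=
    ⟨‖c‖, fun y => le_mul_of_one_le_right (norm_nonneg c) (one_le_rpow (one_le_tau y) hp)⟩
  cases k with
  | zero => exact of_bound contDiff_const hbound
  | succ k =>
    refine of_fderiv contDiff_const hbound ?_
    rw [fderiv_fun_const]
    exact zero

theorem add (hf : IsSymbol k p f) (hg : IsSymbol k p g) : IsSymbol k p fun y => f y + g y := by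
  refine ⟨hf.1.add hg.1, fun m hm => ?_⟩
  obtain ⟨C, hC⟩ := hf.2 m hm
  obtain ⟨D, hD⟩ := hg.2 m hm
  refine ⟨C + D, fun y => ?_⟩
  rw [fun_iteratedFDeriv_add_apply (hf.1.of_le ENat.LEInfty.out).contDiffAt
    (hg.1.of_le ENat.LEInfty.out).contDiffAt, add_mul]
  exact (norm_add_le _ _).trans (add_le_add (hC y) (hD y))

theorem clm_comp (L : F →L[ℝ] G) (hf : IsSymbol k p f) : IsSymbol k p fun y => L (f y) := by
  refine ⟨L.contDiff.comp hf.1, fun m hm => ?_⟩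
  obtain ⟨C, hC⟩ := hf.2 m hm
  refine ⟨‖L‖ * C, fun y => (L.norm_iteratedFDeriv_comp_left hf.1.contDiffAt
    ENat.LEInfty.out).trans ?_⟩
  rw [mul_assoc]
  exact mul_le_mul_of_nonneg_left (hC y) (norm_nonneg L)

theorem const_smul (c : ℝ) (hf : IsSymbol k p f) : IsSymbol k p fun y => c • f y :=
  hf.clm_comp (c • ContinuousLinearMap.id ℝ F)

theorem sub (hf : IsSymbol k p f) (hg : IsSymbol k p g) : IsSymbol k p fun y => f y - g y := by
  simpa [sub_eq_add_neg] using hf.add (hg.const_smul (-1))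

theorem sum {κ : Type*} {s : Finset κ} {u : κ → E → F} (hu : ∀ a ∈ s, IsSymbol k p (u a)) :
    IsSymbol k p fun y => ∑ a ∈ s, u a y := by
  classical
  induction s using Finset.induction_on with
  | empty => simpa using zero
  | insert a s ha ih =>
    simp only [Finset.sum_insert ha]
    exact (hu a (s.mem_insert_self a)).add (ih fun b hb => hu b (Finset.mem_insert_of_mem hb))

theorem pi {κ : Type*} [Fintype κ] {F : κ → Type*} [∀ a, NormedAddCommGroup (F a)]
    [∀ a, NormedSpace ℝ (F a)] {f : E → ∀ a, F a} (hf : ∀ a, IsSymbol k p fun y => f y a) :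
    IsSymbol k p f := by
  classical
  have hsum : f = fun y => ∑ a, ContinuousLinearMap.single ℝ F a (f y a) := by
    ext y : 1
    simp [Finset.univ_sum_single]
  rw [hsum]
  exact sum fun a _ => (hf a).clm_comp _

theorem ite {P : Prop} [Decidable P] (hf : IsSymbol k p f) :
    IsSymbol k p fun y => if P then f y else 0 := by
  split_ifs
  · exact hf
  · exact zero

theorem mul {A : Type*} [NormedRing A] [NormedAlgebra ℝ A] {f g : E → A} (hf : IsSymbol k p f)
    (hg : IsSymbol k q g) : IsSymbol k (p + q) fun y => f y * g y := by
  refine ⟨hf.1.mul hg.1, fun m hm => ?_⟩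
  choose! C hC using hf.2
  choose! D hD using hg.2
  refine ⟨∑ l ∈ Finset.range (m + 1), m.choose l * (C l * D (m - l)), fun y => ?_⟩
  refine (norm_iteratedFDeriv_mul_le hf.1 hg.1 y ENat.LEInfty.out).trans ?_
  rw [Finset.sum_mul]
  refine Finset.sum_le_sum fun l hl => ?_
  have hlm : l ≤ m := by simpa [Nat.lt_succ_iff] using hl
  have hpow : tau y ^ (p + q - m / 2)
      = tau y ^ (p - l / 2) * tau y ^ (q - (m - l : ℕ) / 2) := by
    rw [← rpow_add (tau_pos y)]
    push_cast [hlm]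
    ring_nf
  calc m.choose l * ‖iteratedFDeriv ℝ l f y‖ * ‖iteratedFDeriv ℝ (m - l) g y‖
      = m.choose l * (‖iteratedFDeriv ℝ l f y‖ * ‖iteratedFDeriv ℝ (m - l) g y‖) := by ring
    _ ≤ m.choose l * ((C l * tau y ^ (p - l / 2))
          * (D (m - l) * tau y ^ (q - (m - l : ℕ) / 2))) := by
        gcongr
        · exact (norm_nonneg _).trans (hC l (hlm.trans hm) y)
        · exact hC l (hlm.trans hm) y
        · exact hD (m - l) (by lia) y
    _ = m.choose l * (C l * D (m - l)) * tau y ^ (p + q - m / 2) := by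
        rw [hpow]
        ring

end IsSymbol

end Symbol

namespace IsSymbol

variable {n k : ℕ} {p : ℝ} {f : En n → ℝ}

theorem pder (hf : IsSymbol (k + 1) p f) (i : Fin n) :
    IsSymbol k (p - 1 / 2) fun y => pder i f y :=
  hf.fderiv.clm_comp (ContinuousLinearMap.apply ℝ ℝ (EuclideanSpace.single i 1))

theorem of_pder (hf : ContDiff ℝ ∞ f) (hbound : ∃ C : ℝ, ∀ y, |f y| ≤ C * tau y ^ p)
    (h : ∀ i, IsSymbol k (p - 1 / 2) fun y => _root_.pder i f y) : IsSymbol (k + 1) p f := by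
  have hsum : _root_.fderiv ℝ f = fun y => ∑ i,
      ContinuousLinearMap.smulRight (ContinuousLinearMap.id ℝ ℝ)
        (EuclideanSpace.proj i : En n →L[ℝ] ℝ) (_root_.pder i f y) := by
    ext y v
    rw [fderiv_apply_eq_sum_pder]
    simp [mul_comm]
  refine of_fderiv hf hbound ?_
  rw [hsum]
  exact sum fun i _ => (h i).clm_comp _

theorem coord (i : Fin n) : IsSymbol k (1 / 2) fun y : En n => y i := by
  have hbound : ∃ C : ℝ, ∀ y : En n, |y i| ≤ C * tau y ^ (1 / 2 : ℝ) :=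
    ⟨1, fun y => by simpa using (abs_coord_le_norm y i).trans (norm_le_tau_rpow_half y)⟩
  refine (of_pder (k := k) (by fun_prop) hbound fun j => ?_).mono k.le_succ
  simpa only [pder_coord, sub_self] using const _ le_rfl

theorem inv (hf : IsSymbol k p f) {c : ℝ} (hc : 0 < c) (hlow : ∀ y, c * tau y ^ p ≤ f y) :
    IsSymbol k (-p) fun y => (f y)⁻¹ := by
  have hpos (y) : 0 < f y := (mul_pos hc (tau_rpow_pos p y)).trans_le (hlow y)
  have hsmooth : ContDiff ℝ ∞ fun y => (f y)⁻¹ := hf.1.inv fun y => (hpos y).ne'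
  have hbound : ∃ C : ℝ, ∀ y, |(f y)⁻¹| ≤ C * tau y ^ (-p) := by
    refine ⟨c⁻¹, fun y => ?_⟩
    rw [abs_of_pos (inv_pos.2 (hpos y)), rpow_neg (tau_pos y).le, ← mul_inv]
    exact inv_anti₀ (mul_pos hc (tau_rpow_pos p y)) (hlow y)
  induction k with
  | zero => exact of_bound hsmooth hbound
  | succ k ih =>
    have hinv := ih (hf.mono k.le_succ)
    have hderiv (i : Fin n) : (fun y => _root_.pder i (fun y => (f y)⁻¹) y)
        = fun y => (-1 : ℝ) • (((f y)⁻¹ * (f y)⁻¹) * _root_.pder i f y) := by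
      ext y
      rw [pder_comp (hasDerivAt_inv (hpos y).ne') (hf.1.differentiable (by simp) y)]
      simp only [smul_eq_mul]
      ring
    refine of_pder hsmooth hbound fun i => ?_
    rw [hderiv i]
    exact (((hinv.mul hinv).mul (hf.pder i)).const_smul (-1)).congr_order (by ring)

end IsSymbol

section DriftLaplacian

variable {n : ℕ} {ι : Type*} {f g : En n → ℝ} {y : En n}

/-- The Ornstein–Uhlenbeck operator `Δf - ½ y·∇f`, the scalar principal part of `Lop`. -/
noncomputable def driftLap (f : En n → ℝ) (y : En n) : ℝ :=
  lapS f y - 1 / 2 * ∑ i, y i * pder i f y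

@[fun_prop]
theorem contDiff_driftLap (hf : ContDiff ℝ ∞ f) : ContDiff ℝ ∞ fun y => driftLap f y := by
  unfold driftLap
  fun_prop

theorem driftLap_nonpos_of_isLocalMax (hf : ContDiff ℝ 2 f) (h : IsLocalMax f y) :
    driftLap f y ≤ 0 := by
  simpa [driftLap, pder_eq_zero_of_isLocalMax h] using lapS_nonpos_of_isLocalMax hf h

theorem driftLap_add (hf : ContDiff ℝ 2 f) (hg : ContDiff ℝ 2 g) (y : En n) :
    driftLap (fun z => f z + g z) y = driftLap f y + driftLap g y := by
  simp (disch := fun_prop) only [driftLap, lapS_add, pder_add, mul_add, Finset.sum_add_distrib]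
  ring

theorem driftLap_sub (hf : ContDiff ℝ 2 f) (hg : ContDiff ℝ 2 g) (y : En n) :
    driftLap (fun z => f z - g z) y = driftLap f y - driftLap g y := by
  simp (disch := fun_prop) only [driftLap, lapS_sub, pder_sub, mul_sub, Finset.sum_sub_distrib]
  ring

theorem driftLap_mul (hf : ContDiff ℝ 2 f) (hg : ContDiff ℝ 2 g) (y : En n) :
    driftLap (fun z => f z * g z) y
      = driftLap f y * g y + 2 * (∑ i, pder i f y * pder i g y) + f y * driftLap g y := by
  have hsplit (i : Fin n) : y i * pder i (fun z => f z * g z) y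
      = g y * (y i * pder i f y) + f y * (y i * pder i g y) := by
    rw [pder_mul (by fun_prop) (by fun_prop)]
    ring
  simp only [driftLap, lapS_mul hf hg, hsplit, Finset.sum_add_distrib, ← Finset.mul_sum]
  ring

theorem driftLap_const (c : ℝ) (y : En n) : driftLap (fun _ => c) y = 0 := by
  simp [driftLap, lapS, pder_const]

theorem driftLap_const_mul (hf : ContDiff ℝ 2 f) (c : ℝ) (y : En n) :
    driftLap (fun z => c * f z) y = c * driftLap f y := by
  simp [driftLap_mul contDiff_const hf, driftLap_const, pder_const]

theorem driftLap_sum {s : Finset ι} {u : ι → En n → ℝ} (hu : ∀ a, ContDiff ℝ 2 (u a))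
    (y : En n) : driftLap (fun z => ∑ a ∈ s, u a z) y = ∑ a ∈ s, driftLap (u a) y := by
  simp (disch := fun_prop) only [driftLap, lapS_sum hu, pder_sum, Finset.sum_sub_distrib,
    Finset.mul_sum]
  rw [Finset.sum_comm]

theorem pder_driftLap (hf : ContDiff ℝ ∞ f) (k : Fin n) (y : En n) :
    pder k (fun z => driftLap f z) y
      = driftLap (fun z => pder k f z) y - 1 / 2 * pder k f y := by
  have hradial : pder k (fun z => ∑ i, z i * pder i f z) y
      = pder k f y + ∑ i, y i * pder i (fun z => pder k f z) y := by
    rw [pder_sum (by fun_prop)]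
    simp (disch := fun_prop) [pder_mul, pder_coord, pder_comm _ k, Finset.sum_add_distrib]
  simp only [driftLap]
  rw [pder_sub ((contDiff_lapS hf).differentiable (by simp) y) (by fun_prop),
    pder_const_mul (by fun_prop), hradial, lapS_pder hf]
  ring

theorem driftLap_comp {φ φ' φ'' : ℝ → ℝ} (hφ : ∀ z, HasDerivAt φ (φ' (f z)) (f z))
    (hφ' : HasDerivAt φ' (φ'' (f y)) (f y)) (hf : ContDiff ℝ 2 f) :
    driftLap (fun z => φ (f z)) y
      = φ' (f y) * driftLap f y + φ'' (f y) * ∑ i, pder i f y ^ 2 := by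
  have hpder (i : Fin n) : pder i (fun z => φ (f z)) = fun z => φ' (f z) * pder i f z :=
    funext fun z => pder_comp (hφ z) (by fun_prop) i
  have hd : DifferentiableAt ℝ (fun z => φ' (f z)) y :=
    hφ'.differentiableAt.comp y (by fun_prop)
  have hsecond (i : Fin n) : pder i (fun z => φ' (f z) * pder i f z) y
      = φ'' (f y) * pder i f y ^ 2 + φ' (f y) * pder i (fun z => pder i f z) y := by
    rw [pder_mul hd (by fun_prop), pder_comp hφ' (by fun_prop)]
    ring
  have hdrift : ∑ i, y i * (φ' (f y) * pder i f y) = φ' (f y) * ∑ i, y i * pder i f y := by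
    rw [Finset.mul_sum]
    exact Finset.sum_congr rfl fun i _ => by ring
  simp only [driftLap, lapS, hpder, hsecond, hdrift, Finset.sum_add_distrib, ← Finset.mul_sum]
  ring

theorem pder_tau (i : Fin n) (y : En n) : pder i tau y = 2 * y i := by
  unfold tau
  rw [pder_add (by fun_prop) (contDiff_norm_sq_infty.differentiable (by simp) y), pder_const,
    pder_norm_sq, zero_add]

@[fun_prop]
theorem contDiff_tau : ContDiff ℝ ∞ (tau : En n → ℝ) := by
  unfold tau
  fun_prop

theorem sum_pder_tau_sq (y : En n) : ∑ i, pder i tau y ^ 2 = 4 * (tau y - 1) := by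
  simp only [pder_tau, mul_pow, ← Finset.mul_sum, sum_coord_sq, norm_sq_eq_tau_sub_one]
  norm_num

theorem driftLap_tau (y : En n) : driftLap tau y = 2 * n - (tau y - 1) := by
  have hpder (i : Fin n) : pder i (tau : En n → ℝ) = fun y => 2 * y i := funext (pder_tau i)
  have hsecond (i : Fin n) : pder i (fun y : En n => 2 * y i) y = 2 := by
    rw [pder_const_mul (by fun_prop), pder_coord, if_pos rfl, mul_one]
  have hdrift : ∑ i, y i * (2 * y i) = 2 * (tau y - 1) := by
    rw [← norm_sq_eq_tau_sub_one, ← sum_coord_sq, Finset.mul_sum]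
    exact Finset.sum_congr rfl fun i _ => by ring
  simp only [driftLap, lapS, hpder, hsecond, hdrift, Finset.sum_const, Finset.card_univ,
    Fintype.card_fin, nsmul_eq_mul]
  ring

theorem driftLap_comp_tau {φ φ' φ'' : ℝ → ℝ} (hφ : ∀ t, 1 ≤ t → HasDerivAt φ (φ' t) t)
    (hφ' : ∀ t, 1 ≤ t → HasDerivAt φ' (φ'' t) t) (y : En n) :
    driftLap (fun z => φ (tau z)) y
      = φ' (tau y) * (2 * n - (tau y - 1)) + φ'' (tau y) * (4 * (tau y - 1)) := by
  rw [driftLap_comp (fun z => hφ _ (one_le_tau z)) (hφ' _ (one_le_tau y)) (by fun_prop),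
    driftLap_tau, sum_pder_tau_sq]

end DriftLaplacian

section NormSq

variable {n : ℕ} {ι : Type*} [Fintype ι] {u : ι → En n → ℝ}

/-- The pointwise squared norm of a finite family of functions. -/
def normSq (u : ι → En n → ℝ) (y : En n) : ℝ := ∑ a, u a y ^ 2

/-- The pointwise squared norm of the gradient of a finite family of functions. -/
noncomputable def gradNormSq (u : ι → En n → ℝ) (y : En n) : ℝ := ∑ i, ∑ a, pder i (u a) y ^ 2

theorem normSq_nonneg (u : ι → En n → ℝ) (y : En n) : 0 ≤ normSq u y := by
  unfold normSq
  positivity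

theorem gradNormSq_nonneg (u : ι → En n → ℝ) (y : En n) : 0 ≤ gradNormSq u y := by
  unfold gradNormSq
  positivity

@[fun_prop]
theorem contDiff_normSq (hu : ∀ a, ContDiff ℝ ∞ (u a)) : ContDiff ℝ ∞ fun y => normSq u y := by
  unfold normSq
  fun_prop

theorem abs_le_sqrt_normSq (u : ι → En n → ℝ) (a : ι) (y : En n) : |u a y| ≤ √(normSq u y) :=
  abs_le_sqrt (Finset.single_le_sum (f := fun a => u a y ^ 2) (fun _ _ => sq_nonneg _)
    (Finset.mem_univ a))

theorem abs_pder_le_sqrt_gradNormSq (u : ι → En n → ℝ) (i : Fin n) (a : ι) (y : En n) :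
    |pder i (u a) y| ≤ √(gradNormSq u y) :=
  abs_le_sqrt <| (Finset.single_le_sum (f := fun a => pder i (u a) y ^ 2)
    (fun _ _ => sq_nonneg _) (Finset.mem_univ a)).trans
    (Finset.single_le_sum (f := fun i => ∑ a, pder i (u a) y ^ 2)
      (fun _ _ => Finset.sum_nonneg fun _ _ => sq_nonneg _) (Finset.mem_univ i))

theorem pder_normSq (hu : ∀ a, ContDiff ℝ 2 (u a)) (i : Fin n) (y : En n) :
    pder i (fun y => normSq u y) y = 2 * ∑ a, u a y * pder i (u a) y := by
  simp only [normSq, sq]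
  rw [pder_sum (by fun_prop), Finset.mul_sum]
  refine Finset.sum_congr rfl fun a _ => ?_
  rw [pder_mul (by fun_prop) (by fun_prop)]
  ring

theorem driftLap_normSq (hu : ∀ a, ContDiff ℝ 2 (u a)) (y : En n) :
    driftLap (fun y => normSq u y) y
      = 2 * ∑ a, u a y * driftLap (u a) y + 2 * gradNormSq u y := by
  simp only [normSq, gradNormSq, sq]
  rw [driftLap_sum (by fun_prop), Finset.sum_comm, Finset.mul_sum, Finset.mul_sum,
    ← Finset.sum_add_distrib]
  refine Finset.sum_congr rfl fun a _ => ?_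
  rw [driftLap_mul (by fun_prop) (by fun_prop)]
  ring

/-- Kato's inequality. -/
theorem sum_pder_normSq_sq_le (hu : ∀ a, ContDiff ℝ 2 (u a)) (y : En n) :
    ∑ i, pder i (fun y => normSq u y) y ^ 2 ≤ 4 * normSq u y * gradNormSq u y := by
  rw [gradNormSq, Finset.mul_sum]
  refine Finset.sum_le_sum fun i _ => ?_
  have hcs := Finset.sum_mul_sq_le_sq_mul_sq Finset.univ (fun a => u a y)
    fun a => pder i (u a) y
  rw [pder_normSq hu, mul_pow]
  calc (2 : ℝ) ^ 2 * (∑ a, u a y * pder i (u a) y) ^ 2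
      ≤ 2 ^ 2 * (normSq u y * ∑ a, pder i (u a) y ^ 2) := by gcongr; exact hcs
    _ = 4 * normSq u y * ∑ a, pder i (u a) y ^ 2 := by ring

end NormSq

section DriftSystem

/-- The family of all first derivatives of `u`. -/
noncomputable def gradFamily {n : ℕ} {ι : Type*} (u : ι → En n → ℝ) : Fin n × ι → En n → ℝ :=
  fun p y => pder p.1 (u p.2) y

theorem gradFamily_mk {n : ℕ} {ι : Type*} (u : ι → En n → ℝ) (l : Fin n) (a : ι) :
    gradFamily u (l, a) = fun y => pder l (u a) y := rfl

variable {n k : ℕ} {ι : Type*} [Fintype ι] {c : ℝ} {u : ι → En n → ℝ}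
  {B : ι → Fin n → ι → En n → ℝ} {V : ι → ι → En n → ℝ} {S : ι → En n → ℝ}

/-- The first- and zeroth-order terms coupling a linear system for the family `u`. -/
noncomputable def lowerOrder (u : ι → En n → ℝ) (B : ι → Fin n → ι → En n → ℝ)
    (V : ι → ι → En n → ℝ) (a : ι) (y : En n) : ℝ :=
  ∑ i, ∑ b, B a i b y * pder i (u b) y + ∑ b, V a b y * u b y

/-- `u` is a smooth solution of the system `(Δ - ½ y·∇ + c) u = B·∇u + V u + S`, whose coefficients
are symbols decaying fast enough that `τ ^ c` is the growth rate of the solutions. -/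
structure DriftSystem (k : ℕ) (c : ℝ) (u : ι → En n → ℝ) (B : ι → Fin n → ι → En n → ℝ)
    (V : ι → ι → En n → ℝ) (S : ι → En n → ℝ) : Prop where
  contDiff : ∀ a, ContDiff ℝ ∞ (u a)
  drift : ∀ a i b, IsSymbol k (-1 / 2) (B a i b)
  potential : ∀ a b, IsSymbol k (-1) (V a b)
  source : ∀ a, IsSymbol k (c - 1) (S a)
  eq : ∀ a y, driftLap (u a) y + c * u a y = lowerOrder u B V a y + S a y

/-- The drift of the system solved by `gradFamily u`. -/
def gradDrift (B : ι → Fin n → ι → En n → ℝ) : Fin n × ι → Fin n → Fin n × ι → En n → ℝ :=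
  fun p i q y => if p.1 = q.1 then B p.2 i q.2 y else 0

/-- The potential of the system solved by `gradFamily u`. -/
noncomputable def gradPotential (B : ι → Fin n → ι → En n → ℝ) (V : ι → ι → En n → ℝ) :
    Fin n × ι → Fin n × ι → En n → ℝ :=
  fun p q y => (if p.1 = q.1 then V p.2 q.2 y else 0) + pder p.1 (B p.2 q.1 q.2) y

/-- The source of the system solved by `gradFamily u`; it contains the undifferentiated `u`. -/
noncomputable def gradSource (u : ι → En n → ℝ) (V : ι → ι → En n → ℝ) (S : ι → En n → ℝ) :
    Fin n × ι → En n → ℝ :=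
  fun p y => pder p.1 (S p.2) y + ∑ b, pder p.1 (V p.2 b) y * u b y

theorem normSq_gradFamily (u : ι → En n → ℝ) (y : En n) :
    normSq (gradFamily u) y = gradNormSq u y :=
  Fintype.sum_prod_type _

theorem sum_sum_ite_eq {κ M : Type*} [Fintype κ] [DecidableEq κ] [AddCommMonoid M] (l : κ)
    (F : κ → ι → M) :
    ∑ x, ∑ b, (if l = x then F x b else 0) = ∑ b, F l b := by
  rw [Finset.sum_eq_single l] <;> simp +contextual [eq_comm]

theorem pder_lowerOrder (hu : ∀ a, ContDiff ℝ 2 (u a)) (hB : ∀ a i b, ContDiff ℝ 2 (B a i b))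
    (hV : ∀ a b, ContDiff ℝ 2 (V a b)) (l : Fin n) (a : ι) (y : En n) :
    pder l (fun z => lowerOrder u B V a z) y
      = lowerOrder (gradFamily u) (gradDrift B) (gradPotential B V) (l, a) y
        + ∑ b, pder l (V a b) y * u b y := by
  have hlhs : pder l (fun z => lowerOrder u B V a z) y
      = ∑ i, ∑ b, (pder l (B a i b) y * pder i (u b) y
          + B a i b y * pder i (fun z => pder l (u b) z) y)
        + ∑ b, (pder l (V a b) y * u b y + V a b y * pder l (u b) y) := by
    unfold lowerOrder
    simp (disch := fun_prop) only [pder_add, pder_sum, pder_mul, pder_comm (hu _) l]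
  rw [hlhs]
  simp only [lowerOrder, gradFamily_mk, gradDrift, gradPotential, Fintype.sum_prod_type, add_mul,
    ite_mul, zero_mul, Finset.sum_add_distrib, sum_sum_ite_eq]
  ring

theorem abs_lowerOrder_le {a : ι} {y : En n} {β ν : ℝ} (hB : ∀ i b, |B a i b y| ≤ β)
    (hV : ∀ b, |V a b y| ≤ ν) :
    |lowerOrder u B V a y| ≤ n * (Fintype.card ι * (β * √(gradNormSq u y)))
      + Fintype.card ι * (ν * √(normSq u y)) := by
  have hdrift : |∑ i, ∑ b, B a i b y * pder i (u b) y|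
      ≤ ∑ _i : Fin n, ∑ _b : ι, β * √(gradNormSq u y) := by
    refine (Finset.abs_sum_le_sum_abs _ _).trans (Finset.sum_le_sum fun i _ => ?_)
    refine (Finset.abs_sum_le_sum_abs _ _).trans (Finset.sum_le_sum fun b _ => ?_)
    rw [abs_mul]
    exact mul_le_mul (hB i b) (abs_pder_le_sqrt_gradNormSq u i b y) (abs_nonneg _)
      ((abs_nonneg _).trans (hB i b))
  have hpotential : |∑ b, V a b y * u b y| ≤ ∑ _b : ι, ν * √(normSq u y) := by
    refine (Finset.abs_sum_le_sum_abs _ _).trans (Finset.sum_le_sum fun b _ => ?_)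
    rw [abs_mul]
    exact mul_le_mul (hV b) (abs_le_sqrt_normSq u b y) (abs_nonneg _)
      ((abs_nonneg _).trans (hV b))
  refine (abs_add_le _ _).trans ((add_le_add hdrift hpotential).trans_eq ?_)
  simp only [Finset.sum_const, Finset.card_univ, Fintype.card_fin, nsmul_eq_mul]

theorem abs_sum_mul_le (v : ι → ℝ) {y : En n} {r : ℝ} (hv : ∀ a, |v a| ≤ r) :
    |∑ a, u a y * v a| ≤ √(normSq u y) * (Fintype.card ι * r) := by
  calc |∑ a, u a y * v a|
      ≤ ∑ _a : ι, √(normSq u y) * r := by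
        refine (Finset.abs_sum_le_sum_abs _ _).trans (Finset.sum_le_sum fun a _ => ?_)
        rw [abs_mul]
        exact mul_le_mul (abs_le_sqrt_normSq u a y) (hv a) (abs_nonneg _) (sqrt_nonneg _)
    _ = √(normSq u y) * (Fintype.card ι * r) := by
        simp only [Finset.sum_const, Finset.card_univ, nsmul_eq_mul]
        ring

namespace DriftSystem

theorem mono (h : DriftSystem (k + 1) c u B V S) : DriftSystem k c u B V S where
  contDiff := h.contDiff
  drift a i b := (h.drift a i b).mono k.le_succ
  potential a b := (h.potential a b).mono k.le_succ
  source a := (h.source a).mono k.le_succ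
  eq := h.eq

theorem deriv_eq (h : DriftSystem k c u B V S) (p : Fin n × ι) (y : En n) :
    driftLap (gradFamily u p) y + (c - 1 / 2) * gradFamily u p y
      = lowerOrder (gradFamily u) (gradDrift B) (gradPotential B V) p y
        + gradSource u V S p y := by
  obtain ⟨l, a⟩ := p
  have hu a : ContDiff ℝ 2 (u a) := contDiff_two_of_infty (h.contDiff a)
  have hB a i b : ContDiff ℝ 2 (B a i b) := contDiff_two_of_infty (h.drift a i b).contDiff
  have hV a b : ContDiff ℝ 2 (V a b) := contDiff_two_of_infty (h.potential a b).contDiff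
  have hS a : ContDiff ℝ 2 (S a) := contDiff_two_of_infty (h.source a).contDiff
  have hdrift : DifferentiableAt ℝ (fun z => driftLap (u a) z) y :=
    (contDiff_driftLap (h.contDiff a)).differentiable (by simp) y
  have hlower : DifferentiableAt ℝ (fun z => lowerOrder u B V a z) y := by
    unfold lowerOrder
    fun_prop
  have hleft : pder l (fun z => driftLap (u a) z + c * u a z) y
      = driftLap (gradFamily u (l, a)) y + (c - 1 / 2) * gradFamily u (l, a) y := by
    rw [pder_add hdrift (by fun_prop), pder_const_mul (by fun_prop), pder_driftLap (h.contDiff a)]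
    simp only [gradFamily_mk]
    ring
  have hright : pder l (fun z => lowerOrder u B V a z + S a z) y
      = lowerOrder (gradFamily u) (gradDrift B) (gradPotential B V) (l, a) y
        + gradSource u V S (l, a) y := by
    rw [pder_add hlower (by fun_prop), pder_lowerOrder hu hB hV]
    simp only [gradSource]
    ring
  rw [← hleft, ← hright]
  exact congrArg (pder l · y) (funext (h.eq a))

theorem deriv (h : DriftSystem (k + 1) c u B V S) (hu : ∀ a, IsSymbol k c (u a)) :
    DriftSystem k (c - 1 / 2) (gradFamily u) (gradDrift B) (gradPotential B V)
      (gradSource u V S) where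
  contDiff p := contDiff_pder (h.contDiff p.2) p.1
  drift p i q := ((h.drift p.2 i q.2).mono k.le_succ).ite
  potential p q := ((h.potential p.2 q.2).mono k.le_succ).ite.add
    (((h.drift p.2 q.1 q.2).pder p.1).congr_order (by norm_num))
  source p := (((h.source p.2).pder p.1).congr_order (by ring)).add <| IsSymbol.sum fun b _ =>
    (((h.potential p.2 b).pder p.1).mul (hu b)).congr_order (by ring)
  eq := h.deriv_eq

theorem exists_lowerOrder_le (h : DriftSystem k c u B V S) : ∃ C : ℝ, 0 ≤ C ∧ ∀ y,
    |∑ a, u a y * lowerOrder u B V a y| ≤ √(normSq u y) *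
      (C * tau y ^ (-1 / 2 : ℝ) * √(gradNormSq u y) + C * tau y ^ (-1 : ℝ) * √(normSq u y)) := by
  obtain ⟨C₁, hC₁0, hC₁⟩ := IsSymbol.exists_forall_norm_le
    (u := fun p : ι × Fin n × ι => B p.1 p.2.1 p.2.2) fun _ => h.drift _ _ _
  obtain ⟨C₂, hC₂0, hC₂⟩ := IsSymbol.exists_forall_norm_le
    (u := fun p : ι × ι => V p.1 p.2) fun _ => h.potential _ _
  set N : ℝ := (Fintype.card ι : ℝ)
  refine ⟨N * (n * (N * C₁) + N * C₂), by positivity, fun y => ?_⟩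
  have hp := (tau_rpow_pos (-1 / 2) y).le
  have hq := (tau_rpow_pos (-1) y).le
  calc |∑ a, u a y * lowerOrder u B V a y|
      ≤ √(normSq u y) * (N * (n * (N * (C₁ * tau y ^ (-1 / 2 : ℝ) * √(gradNormSq u y)))
          + N * (C₂ * tau y ^ (-1 : ℝ) * √(normSq u y)))) :=
        abs_sum_mul_le _ fun a => abs_lowerOrder_le (fun i b => hC₁ (a, i, b) y)
          fun b => hC₂ (a, b) y
    _ = √(normSq u y) * (N * (n * (N * C₁)) * tau y ^ (-1 / 2 : ℝ) * √(gradNormSq u y)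
          + N * (N * C₂) * tau y ^ (-1 : ℝ) * √(normSq u y)) := by ring
    _ ≤ _ := by
        gcongr √(normSq u y) * (?_ * _ * _ + ?_ * _ * _)
        · nlinarith [show 0 ≤ N * (N * C₂) by positivity]
        · nlinarith [show 0 ≤ N * (n * (N * C₁)) by positivity]

theorem exists_source_le (h : DriftSystem k c u B V S) : ∃ C : ℝ, 0 ≤ C ∧ ∀ y,
    |∑ a, u a y * S a y| ≤ √(normSq u y) * (C * tau y ^ (c - 1)) := by
  obtain ⟨C, hC0, hC⟩ := IsSymbol.exists_forall_norm_le h.source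
  refine ⟨Fintype.card ι * C, by positivity, fun y => ?_⟩
  simpa only [mul_assoc] using abs_sum_mul_le _ fun a => hC a y

theorem driftLap_normSq_eq (h : DriftSystem k c u B V S) (y : En n) :
    driftLap (fun y => normSq u y) y = 2 * gradNormSq u y - 2 * c * normSq u y
      + 2 * ∑ a, u a y * lowerOrder u B V a y + 2 * ∑ a, u a y * S a y := by
  have hpair (a : ι) : u a y * driftLap (u a) y
      = u a y * lowerOrder u B V a y + u a y * S a y - c * u a y ^ 2 := by
    linear_combination u a y * h.eq a y
  rw [driftLap_normSq fun a => contDiff_two_of_infty (h.contDiff a)]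
  simp only [hpair, Finset.sum_sub_distrib, Finset.sum_add_distrib, ← Finset.mul_sum, normSq]
  ring

/-- A Bochner inequality: the good term `|∇u|²` survives absorbing the coupling. -/
theorem exists_le_driftLap_normSq (h : DriftSystem k c u B V S) : ∃ C : ℝ, 0 ≤ C ∧ ∀ y,
    gradNormSq u y - C * normSq u y - 2 * |∑ a, u a y * S a y|
      ≤ driftLap (fun y => normSq u y) y := by
  obtain ⟨C, hC0, hC⟩ := h.exists_lowerOrder_le
  refine ⟨2 * |c| + C ^ 2 + 2 * C, by positivity, fun y => ?_⟩
  set X := √(normSq u y)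
  set Y := √(gradNormSq u y)
  have hX : X ^ 2 = normSq u y := sq_sqrt (normSq_nonneg u y)
  have hY : Y ^ 2 = gradNormSq u y := sq_sqrt (gradNormSq_nonneg u y)
  have hlower : |∑ a, u a y * lowerOrder u B V a y| ≤ X * (C * 1 * Y + C * 1 * X) := by
    refine (hC y).trans ?_
    gcongr <;> exact rpow_le_one_of_one_le_of_nonpos (one_le_tau y) (by norm_num)
  have hc : c * normSq u y ≤ |c| * normSq u y :=
    mul_le_mul_of_nonneg_right (le_abs_self c) (normSq_nonneg u y)
  have hlower' := (abs_le.1 hlower).1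
  have hsource := neg_abs_le (∑ a, u a y * S a y)
  rw [h.driftLap_normSq_eq]
  nlinarith [sq_nonneg (Y - C * X)]

end DriftSystem

end DriftSystem

section Barrier

/-- The left-hand side of the scalar differential inequality satisfied by `φ(τ)` wherever it
touches the norm of a solution of a `DriftSystem` from above; `v`, `v'`, `v''` are the values at
`t` of `φ` and its derivatives, and `s` bounds the source. -/
noncomputable def barrierOp (n : ℕ) (c C s t v v' v'' : ℝ) : ℝ :=
  v' * (2 * n - (t - 1)) + v'' * (4 * (t - 1)) + c * v + C * (2 * |v'|) + C * t⁻¹ * v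
    + s * t ^ (c - 1)

/-- `φ` is a strict supersolution on `(T, ∞)` of the differential inequality of `barrierOp`. -/
def IsBarrier (n : ℕ) (c C T s : ℝ) (φ : ℝ → ℝ) : Prop :=
  ContDiffOn ℝ 2 φ (Ioi 0) ∧ ∃ φ' φ'' : ℝ → ℝ, (∀ t, 1 ≤ t → HasDerivAt φ (φ' t) t) ∧
    (∀ t, 1 ≤ t → HasDerivAt φ' (φ'' t) t) ∧
    ∀ t, T < t → barrierOp n c C s t (φ t) (φ' t) (φ'' t) < 0

variable {n : ℕ} {c C T s s' : ℝ} {φ ψ : ℝ → ℝ}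

namespace IsBarrier

theorem contDiff_comp_tau (h : IsBarrier n c C T s φ) : ContDiff ℝ 2 fun y : En n => φ (tau y) :=
  h.1.comp_contDiff (contDiff_two_of_infty contDiff_tau) fun y => tau_pos y

theorem add (hC : 0 ≤ C) (h : IsBarrier n c C T s φ) (h' : IsBarrier n c C T s' ψ) :
    IsBarrier n c C T (s + s') fun t => φ t + ψ t := by
  obtain ⟨hφ, φ', φ'', hφ', hφ'', hφneg⟩ := h
  obtain ⟨hψ, ψ', ψ'', hψ', hψ'', hψneg⟩ := h'
  refine ⟨hφ.add hψ, fun t => φ' t + ψ' t, fun t => φ'' t + ψ'' t,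
    fun t ht => (hφ' t ht).add (hψ' t ht), fun t ht => (hφ'' t ht).add (hψ'' t ht), fun t ht => ?_⟩
  have h₁ := hφneg t ht
  have h₂ := hψneg t ht
  have habs := mul_le_mul_of_nonneg_left (abs_add_le (φ' t) (ψ' t)) hC
  unfold barrierOp at *
  linarith

theorem const_mul {κ : ℝ} (hκ : 0 < κ) (h : IsBarrier n c C T s φ) :
    IsBarrier n c C T (κ * s) fun t => κ * φ t := by
  obtain ⟨hφ, φ', φ'', hφ', hφ'', hφneg⟩ := h
  refine ⟨contDiffOn_const.mul hφ, fun t => κ * φ' t, fun t => κ * φ'' t,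
    fun t ht => (hφ' t ht).const_mul κ, fun t ht => (hφ'' t ht).const_mul κ, fun t ht => ?_⟩
  have hneg := mul_neg_of_pos_of_neg hκ (hφneg t ht)
  simp only [barrierOp, abs_mul, abs_of_pos hκ] at hneg ⊢
  linarith

theorem mono {T' : ℝ} (hT : 0 ≤ T) (hTT' : T ≤ T') (hs : s' ≤ s) (h : IsBarrier n c C T s φ) :
    IsBarrier n c C T' s' φ := by
  obtain ⟨hφ, φ', φ'', hφ', hφ'', hφneg⟩ := h
  refine ⟨hφ, φ', φ'', hφ', hφ'', fun t ht => ?_⟩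
  have ht' := hTT'.trans_lt ht
  have hneg := hφneg t ht'
  have hsource := mul_le_mul_of_nonneg_right hs (rpow_nonneg (hT.trans ht'.le) (c - 1))
  unfold barrierOp at *
  linarith

end IsBarrier

theorem barrierOp_rpow (n : ℕ) (c C s K : ℝ) {t : ℝ} (ht : 0 < t) :
    barrierOp n c C s t (t ^ c - K * t ^ (c - 1))
        (c * t ^ (c - 1) - K * ((c - 1) * t ^ (c - 1 - 1)))
        (c * ((c - 1) * t ^ (c - 1 - 1)) - K * ((c - 1) * ((c - 1 - 1) * t ^ (c - 1 - 1 - 1))))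
      = t ^ (c - 1) * (2 * n * (c - (c - 1) * K * t⁻¹)
        + 4 * (1 - t⁻¹) * (c * (c - 1) - (c - 1) * (c - 2) * K * t⁻¹)
        + (c - K - (c - 1) * K * t⁻¹) + 2 * C * |c - (c - 1) * K * t⁻¹| + C * (1 - K * t⁻¹)
        + s) := by
  have habs : |c * t ^ (c - 1) - K * ((c - 1) * (t ^ (c - 1) / t))|
      = t ^ (c - 1) * |c - (c - 1) * K * t⁻¹| := by
    rw [← abs_of_pos (rpow_pos_of_pos ht (c - 1)), ← abs_mul,
      abs_of_pos (rpow_pos_of_pos ht (c - 1))]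
    ring_nf
  have hpow : t ^ c = t * t ^ (c - 1) := by
    rw [rpow_sub_one ht.ne']
    field_simp
  simp only [barrierOp, rpow_sub_one ht.ne' (c - 1 - 1), rpow_sub_one ht.ne' (c - 1), habs, hpow]
  field_simp
  ring

theorem exists_isBarrier_rpow (n : ℕ) (c C s : ℝ) : ∃ K T : ℝ, 0 ≤ K ∧ 1 ≤ T ∧
    IsBarrier n c C T s fun t => t ^ c - K * t ^ (c - 1) := by
  set K : ℝ := |2 * n * c + 4 * (c * (c - 1)) + c + 2 * C * |c| + C + s| + 1
  set P : ℝ → ℝ := fun i => 2 * n * (c - (c - 1) * K * i)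
    + 4 * (1 - i) * (c * (c - 1) - (c - 1) * (c - 2) * K * i) + (c - K - (c - 1) * K * i)
    + 2 * C * |c - (c - 1) * K * i| + C * (1 - K * i) + s with hP
  have hP0 : P 0 < 0 := by
    have := le_abs_self (2 * n * c + 4 * (c * (c - 1)) + c + 2 * C * |c| + C + s)
    simp only [hP, mul_zero, sub_zero, mul_one, K]
    linarith
  have hlim : Tendsto (fun t : ℝ => P t⁻¹) atTop (𝓝 (P 0)) :=
    (Continuous.tendsto (by fun_prop) 0).comp tendsto_inv_atTop_zero
  obtain ⟨T, hT⟩ := eventually_atTop.1 (hlim.eventually_lt_const hP0)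
  have hsmooth (p : ℝ) : ContDiffOn ℝ 2 (fun t : ℝ => t ^ p) (Ioi 0) := fun t ht =>
    (contDiffAt_rpow_const_of_ne (ne_of_gt ht)).contDiffWithinAt
  have hderiv (p t : ℝ) (ht : 1 ≤ t) : HasDerivAt (fun t : ℝ => t ^ p) (p * t ^ (p - 1)) t :=
    hasDerivAt_rpow_const (Or.inl (one_pos.trans_le ht).ne')
  refine ⟨K, max 1 T, by positivity, le_max_left _ _,
    (hsmooth c).sub (contDiffOn_const.mul (hsmooth (c - 1))), _, _,
    fun t ht => (hderiv c t ht).sub ((hderiv (c - 1) t ht).const_mul K),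
    fun t ht => ((hderiv (c - 1) t ht).const_mul c).sub
      (((hderiv (c - 1 - 1) t ht).const_mul (c - 1)).const_mul K), fun t ht => ?_⟩
  rw [max_lt_iff] at ht
  have ht0 : 0 < t := one_pos.trans ht.1
  rw [barrierOp_rpow n c C s K ht0]
  exact mul_neg_of_pos_of_neg (rpow_pos_of_pos ht0 _) (hT t ht.2.le)

theorem exists_isBarrier_exp (n : ℕ) (c C : ℝ) {β : ℝ} (hβ : 0 < β) (hβ' : β < 1 / 4) :
    ∃ T : ℝ, 1 ≤ T ∧ IsBarrier n c C T 0 fun t => exp (β * t) := by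
  set P : ℝ → ℝ := fun i => β * (2 * n * i - 1 + i) + 4 * β ^ 2 * (1 - i) + c * i
    + 2 * C * β * i + C * i ^ 2 with hP
  have hP0 : P 0 < 0 := by
    simp only [hP]
    nlinarith
  have hlim : Tendsto (fun t : ℝ => P t⁻¹) atTop (𝓝 (P 0)) :=
    (Continuous.tendsto (by fun_prop) 0).comp tendsto_inv_atTop_zero
  obtain ⟨T, hT⟩ := eventually_atTop.1 (hlim.eventually_lt_const hP0)
  have hderiv (t : ℝ) : HasDerivAt (fun t => exp (β * t)) (β * exp (β * t)) t := by
    simpa [mul_comm] using ((hasDerivAt_id t).const_mul β).exp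
  refine ⟨max 1 T, le_max_left _ _, by fun_prop, _, _, fun t _ => hderiv t,
    fun t _ => (hderiv t).const_mul β, fun t ht => ?_⟩
  rw [max_lt_iff] at ht
  have ht0 : 0 < t := one_pos.trans ht.1
  have hfactor : barrierOp n c C 0 t (exp (β * t)) (β * exp (β * t)) (β * (β * exp (β * t)))
      = t * exp (β * t) * P t⁻¹ := by
    rw [barrierOp, abs_of_pos (by positivity)]
    simp only [hP]
    field_simp
    ring
  rw [hfactor]
  exact mul_neg_of_pos_of_neg (by positivity) (hT t ht.2.le)

end Barrier

section MaximumPrinciple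

variable {n : ℕ}

theorem isCompact_setOf_tau_le (T : ℝ) : IsCompact {y : En n | tau y ≤ T} := by
  refine isCompact_of_isClosed_isBounded (isClosed_le contDiff_tau.continuous continuous_const) ?_
  refine isBounded_iff_forall_norm_le.2 ⟨√(T - 1), fun y hy => le_sqrt_of_sq_le ?_⟩
  rw [norm_sq_eq_tau_sub_one]
  exact sub_le_sub_right hy 1

theorem le_of_forall_not_isLocalMax {f G : En n → ℝ} {T : ℝ} (hf : Continuous f)
    (hG : Continuous G) (hpos : ∀ y, T ≤ tau y → 0 < G y) (hT : ∀ y, tau y = T → f y ≤ G y)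
    (hinfty : ∃ T₁, ∀ y, T₁ ≤ tau y → f y ≤ G y)
    (htouch : ∀ q > 1, ∀ y, T < tau y → f y = q * G y →
      ¬ IsLocalMax (fun z => f z - q * G z) y) {y : En n} (hy : T ≤ tau y) : f y ≤ G y := by
  by_contra! hlt
  obtain ⟨T₁, hT₁⟩ := hinfty
  have htau : Continuous (tau : En n → ℝ) := contDiff_tau.continuous
  have hbelow (z : En n) (hz : G z < f z) : tau z < T₁ := lt_of_not_ge fun h => (hT₁ z h).not_gt hz
  have hcompact : IsCompact ({z : En n | tau z ≤ T₁} ∩ {z | T ≤ tau z}) :=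
    (isCompact_setOf_tau_le T₁).inter_right (isClosed_le continuous_const htau)
  obtain ⟨z, ⟨-, hzT⟩, hmax⟩ := hcompact.exists_isMaxOn ⟨y, (hbelow y hlt).le, hy⟩
    (f := fun z => f z / G z) (hf.continuousOn.div hG.continuousOn fun z hz => (hpos z hz.2).ne')
  have hq : 1 < f z / G z :=
    ((one_lt_div (hpos y hy)).2 hlt).trans_le (hmax ⟨(hbelow y hlt).le, hy⟩)
  have hfz : f z = f z / G z * G z := (div_mul_cancel₀ _ (hpos z hzT).ne').symm
  have hGf : G z < f z := (one_lt_div (hpos z hzT)).1 hq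
  have hTz : T < tau z := lt_of_le_of_ne hzT fun h => (hT z h.symm).not_gt hGf
  refine htouch _ hq z hTz hfz ?_
  filter_upwards [htau.continuousAt.eventually_lt_const (hbelow z hGf),
    htau.continuousAt.eventually_const_lt hTz] with w hw₁ hw
  have hratio := (div_le_iff₀ (hpos w hw.le)).1 (hmax ⟨hw₁.le, hw.le⟩)
  linarith

end MaximumPrinciple

section Comparison

variable {n k : ℕ} {ι : Type*} [Fintype ι] {c : ℝ} {u : ι → En n → ℝ}
  {B : ι → Fin n → ι → En n → ℝ} {V : ι → ι → En n → ℝ} {S : ι → En n → ℝ}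

theorem sum_pder_sq_le_gradNormSq_of_isLocalMax (hu : ∀ a, ContDiff ℝ 2 (u a)) {h : En n → ℝ}
    (hh : ContDiff ℝ 2 h) {y : En n} (hpos : 0 < h y) (heq : normSq u y = h y ^ 2)
    (hmax : IsLocalMax (fun z => normSq u z - h z * h z) y) :
    ∑ i, pder i h y ^ 2 ≤ gradNormSq u y := by
  have hnormSq : ContDiff ℝ 2 fun z => normSq u z := by
    unfold normSq
    fun_prop
  have hgrad (i : Fin n) : pder i (fun z => normSq u z) y = 2 * h y * pder i h y := by
    have hcrit := pder_eq_zero_of_isLocalMax hmax i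
    rw [pder_sub (by fun_prop) (by fun_prop), pder_mul (by fun_prop) (by fun_prop)] at hcrit
    linarith
  have hkato := sum_pder_normSq_sq_le hu y
  simp only [hgrad, mul_pow, ← Finset.mul_sum, heq] at hkato
  have hsq : 0 < h y ^ 2 := by positivity
  nlinarith

theorem driftLap_normSq_le_of_isLocalMax (hu : ∀ a, ContDiff ℝ 2 (u a)) {h : En n → ℝ}
    (hh : ContDiff ℝ 2 h) {y : En n} (hmax : IsLocalMax (fun z => normSq u z - h z * h z) y) :
    driftLap (fun z => normSq u z) y ≤ 2 * h y * driftLap h y + 2 * ∑ i, pder i h y ^ 2 := by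
  have hnormSq : ContDiff ℝ 2 fun z => normSq u z := by
    unfold normSq
    fun_prop
  have hle := driftLap_nonpos_of_isLocalMax (by fun_prop) hmax
  rw [driftLap_sub (by fun_prop) (by fun_prop), driftLap_mul hh hh] at hle
  simp only [← sq] at hle
  linarith

/-- The norm of a solution is a viscosity subsolution of a scalar inequality. -/
theorem DriftSystem.exists_driftLap_ge_of_isLocalMax (hsys : DriftSystem k c u B V S) :
    ∃ C : ℝ, 0 ≤ C ∧ ∀ (h : En n → ℝ) (y : En n), ContDiff ℝ 2 h → 0 < h y →
      normSq u y = h y ^ 2 → IsLocalMax (fun z => normSq u z - h z * h z) y →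
      0 ≤ driftLap h y + c * h y + C * (tau y ^ (-1 / 2 : ℝ) * √(∑ i, pder i h y ^ 2))
        + C * (tau y)⁻¹ * h y + C * tau y ^ (c - 1) := by
  obtain ⟨C₁, hC₁0, hlower⟩ := hsys.exists_lowerOrder_le
  obtain ⟨C₂, hC₂0, hsource⟩ := hsys.exists_source_le
  refine ⟨C₁ + C₁ ^ 2 + C₂, by positivity, fun h y hh hpos heq hmax => ?_⟩
  have hu a : ContDiff ℝ 2 (u a) := contDiff_two_of_infty (hsys.contDiff a)
  have hlap := driftLap_normSq_le_of_isLocalMax hu hh hmax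
  rw [hsys.driftLap_normSq_eq] at hlap
  have hsqrt : √(normSq u y) = h y := by rw [heq, sqrt_sq hpos.le]
  have hlower' := (abs_le.1 (hlower y)).1
  have hsource' := (abs_le.1 (hsource y)).1
  rw [rpow_neg_one, hsqrt] at hlower'
  rw [hsqrt] at hsource'
  set t := tau y ^ (-1 / 2 : ℝ)
  set w := tau y ^ (c - 1)
  have ht : t ^ 2 = (tau y)⁻¹ := by
    rw [← rpow_natCast, ← rpow_mul (tau_pos y).le, ← rpow_neg_one]
    norm_num
  have ht0 : 0 < t := tau_rpow_pos _ y
  have hw0 : 0 < w := tau_rpow_pos _ y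
  set X := √(gradNormSq u y)
  set X₀ := √(∑ i, pder i h y ^ 2)
  have hX : X ^ 2 = gradNormSq u y := sq_sqrt (gradNormSq_nonneg u y)
  have hX₀ : X₀ ^ 2 = ∑ i, pder i h y ^ 2 := sq_sqrt (by positivity)
  have hXX₀ : X₀ ≤ X :=
    sqrt_le_sqrt (sum_pder_sq_le_gradNormSq_of_isLocalMax hu hh hpos heq hmax)
  rw [← ht] at hlower'
  rw [heq, ← hX, ← hX₀] at hlap
  rw [← ht]
  have hX₀0 : 0 ≤ X₀ := sqrt_nonneg _
  -- `X² - aX` is almost monotone: its defect is at most `a²`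
  have hyoung : X₀ ^ 2 - C₁ * t * h y * X₀ - (C₁ * t * h y) ^ 2
      ≤ X ^ 2 - C₁ * t * h y * X := by
    nlinarith [sq_nonneg (X - X₀ - C₁ * t * h y), mul_nonneg hX₀0 (sub_nonneg.2 hXX₀)]
  refine nonneg_of_mul_nonneg_right (a := h y) ?_ hpos
  have hextra : 0 ≤ h y * ((C₁ ^ 2 + C₂) * (t * X₀) + C₂ * t ^ 2 * h y + (C₁ + C₁ ^ 2) * w) := by
    positivity
  nlinarith

theorem tau_rpow_mul_sqrt_sum_pder_comp_tau_le {φ : ℝ → ℝ} {v : ℝ} {y : En n}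
    (hφ : HasDerivAt φ v (tau y)) :
    tau y ^ (-1 / 2 : ℝ) * √(∑ i, pder i (fun z => φ (tau z)) y ^ 2) ≤ 2 * |v| := by
  have hsum : ∑ i, pder i (fun z => φ (tau z)) y ^ 2 = v ^ 2 * (4 * (tau y - 1)) := by
    rw [← sum_pder_tau_sq, Finset.mul_sum]
    refine Finset.sum_congr rfl fun i _ => ?_
    rw [pder_comp hφ (contDiff_tau.differentiable (by simp) y), mul_pow]
  have hle : √(∑ i, pder i (fun z => φ (tau z)) y ^ 2) ≤ √((2 * |v|) ^ 2 * tau y) := by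
    rw [hsum, mul_pow, sq_abs]
    exact sqrt_le_sqrt (by nlinarith [sq_nonneg v])
  rw [sqrt_mul (sq_nonneg _), sqrt_sq (by positivity), sqrt_eq_rpow (tau y)] at hle
  have hτ : tau y ^ (-1 / 2 : ℝ) * tau y ^ (1 / 2 : ℝ) = 1 := by
    rw [← rpow_add (tau_pos y)]
    norm_num
  calc tau y ^ (-1 / 2 : ℝ) * √(∑ i, pder i (fun z => φ (tau z)) y ^ 2)
      ≤ tau y ^ (-1 / 2 : ℝ) * (2 * |v| * tau y ^ (1 / 2 : ℝ)) :=
        mul_le_mul_of_nonneg_left hle (tau_rpow_pos _ y).le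
    _ = 2 * |v| := by linear_combination 2 * |v| * hτ

theorem DriftSystem.exists_not_isLocalMax (hsys : DriftSystem k c u B V S) :
    ∃ C : ℝ, 0 ≤ C ∧ ∀ (T s : ℝ) (φ : ℝ → ℝ) (y : En n), IsBarrier n c C T s φ → C ≤ s →
      T < tau y → 0 < φ (tau y) → normSq u y = φ (tau y) ^ 2 →
      ¬ IsLocalMax (fun z => normSq u z - φ (tau z) * φ (tau z)) y := by
  obtain ⟨C, hC0, hC⟩ := hsys.exists_driftLap_ge_of_isLocalMax
  refine ⟨C, hC0, fun T s φ y hφ hs hy hpos heq hmax => ?_⟩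
  have hge := hC _ y hφ.contDiff_comp_tau hpos heq hmax
  obtain ⟨-, φ', φ'', hφ', hφ'', hneg⟩ := hφ
  rw [driftLap_comp_tau hφ' hφ''] at hge
  have hgrad := mul_le_mul_of_nonneg_left
    (tau_rpow_mul_sqrt_sum_pder_comp_tau_le (hφ' _ (one_le_tau y))) hC0
  have hsource := mul_le_mul_of_nonneg_right hs (tau_rpow_pos (c - 1) y).le
  have hbarrier := hneg _ hy
  unfold barrierOp at hbarrier
  linarith

theorem DriftSystem.exists_sqrt_normSq_le_of_isBarrier (hsys : DriftSystem k c u B V S) :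
    ∃ C : ℝ, 0 ≤ C ∧ ∀ (T s : ℝ) (φ : ℝ → ℝ), IsBarrier n c C T s φ → C ≤ s →
      (∀ t, T ≤ t → 0 < φ t) → (∀ y, tau y = T → √(normSq u y) ≤ φ (tau y)) →
      (∃ T₁, ∀ y, T₁ ≤ tau y → √(normSq u y) ≤ φ (tau y)) →
      ∀ y, T ≤ tau y → √(normSq u y) ≤ φ (tau y) := by
  obtain ⟨C, hC0, hC⟩ := hsys.exists_not_isLocalMax
  refine ⟨C, hC0, fun T s φ hφ hs hpos hT hinfty y hy => ?_⟩
  have hφcont : Continuous fun z : En n => φ (tau z) := hφ.contDiff_comp_tau.continuous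
  refine le_of_forall_not_isLocalMax ((contDiff_normSq hsys.contDiff).continuous.sqrt)
    hφcont (fun z hz => hpos _ hz) hT hinfty (fun q hq z hz hqz hmax => ?_) hy
  have hq0 : 0 < q := one_pos.trans hq
  have hpos' (w : En n) (hw : T < tau w) : 0 < q * φ (tau w) := mul_pos hq0 (hpos _ hw.le)
  refine hC T (q * s) _ z (hφ.const_mul hq0) ?_ hz (hpos' z hz) ?_ ?_
  · nlinarith
  · rw [← hqz, sq_sqrt (normSq_nonneg u z)]
  · filter_upwards [hmax] with w hw
    have hle : √(normSq u w) ≤ q * φ (tau w) := by linarith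
    have hsq := pow_le_pow_left₀ (sqrt_nonneg _) hle 2
    rw [sq_sqrt (normSq_nonneg u w)] at hsq
    rw [← hqz, mul_self_sqrt (normSq_nonneg u z)]
    linarith

theorem exists_isBarrier_rpow_add_exp (n : ℕ) (c : ℝ) {C β : ℝ} (hC : 0 ≤ C) (hβ : 0 < β)
    (hβ' : β < 1 / 4) : ∃ (T : ℝ) (ψ : ℝ → ℝ),
      (∀ t, T ≤ t → 0 < t ∧ t ^ c / 2 ≤ ψ t ∧ ψ t ≤ t ^ c) ∧
      ∀ M ≥ 1, ∀ ε > 0, IsBarrier n c C T C fun t => M * ψ t + ε * exp (β * t) := by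
  obtain ⟨K, T₁, hK, hT₁, hrpow⟩ := exists_isBarrier_rpow n c C C
  obtain ⟨T₂, hT₂, hexp⟩ := exists_isBarrier_exp n c C hβ hβ'
  set T := max (max T₁ T₂) (2 * K)
  have hTT₁ : T₁ ≤ T := (le_max_left _ _).trans (le_max_left _ _)
  have hTT₂ : T₂ ≤ T := (le_max_right _ _).trans (le_max_left _ _)
  refine ⟨T, fun t => t ^ c - K * t ^ (c - 1), fun t ht => ?_, fun M hM ε hε => ?_⟩
  · have ht0 : 0 < t := one_pos.trans_le (hT₁.trans (hTT₁.trans ht))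
    have hpow : t ^ c = t * t ^ (c - 1) := by
      rw [rpow_sub_one ht0.ne']
      field_simp
    have hpos := rpow_pos_of_pos ht0 (c - 1)
    have hKt : 2 * K ≤ t := (le_max_right _ _).trans ht
    have hKpow := mul_le_mul_of_nonneg_right hKt hpos.le
    have hKpow0 := mul_nonneg hK hpos.le
    exact ⟨ht0, by linarith, by linarith⟩
  · exact (((hrpow.mono (zero_le_one.trans hT₁) hTT₁ le_rfl).const_mul (one_pos.trans_le hM)).add
      hC ((hexp.mono (zero_le_one.trans hT₂) hTT₂ le_rfl).const_mul hε)).mono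
      (zero_le_one.trans (hT₁.trans hTT₁)) le_rfl (by nlinarith)

theorem exists_exp_le_mul_exp {β γ : ℝ} (hβγ : β < γ) (A : ℝ) {ε : ℝ} (hε : 0 < ε) :
    ∃ T : ℝ, ∀ t, T ≤ t → A * exp (β * t) ≤ ε * exp (γ * t) := by
  have hlim : Tendsto (fun t : ℝ => A * exp ((β - γ) * t)) atTop (𝓝 (A * 0)) :=
    (tendsto_exp_atBot.comp (tendsto_id.const_mul_atTop_of_neg (sub_neg.2 hβγ))).const_mul A
  rw [mul_zero] at hlim
  obtain ⟨T, hT⟩ := eventually_atTop.1 (hlim.eventually_le_const hε)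
  refine ⟨T, fun t ht => ?_⟩
  calc A * exp (β * t) = A * exp ((β - γ) * t) * exp (γ * t) := by
        rw [mul_assoc, ← exp_add]
        ring_nf
    _ ≤ ε * exp (γ * t) := by
        gcongr
        exact hT t ht

theorem exists_le_mul_tau_rpow_of_tau_le {f : En n → ℝ} (hf : Continuous f) (p T : ℝ) :
    ∃ m : ℝ, 0 ≤ m ∧ ∀ y, tau y ≤ T → f y ≤ m * tau y ^ p := by
  have hcont : Continuous fun y : En n => f y * tau y ^ (-p) :=
    hf.mul (contDiff_tau.continuous.rpow_const fun y => Or.inl (tau_pos y).ne')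
  obtain ⟨m, hm⟩ := (isCompact_setOf_tau_le T).exists_bound_of_continuousOn hcont.continuousOn
  refine ⟨|m|, abs_nonneg m, fun y hy => ?_⟩
  rw [← div_le_iff₀ (tau_rpow_pos p y), div_eq_mul_inv, ← rpow_neg (tau_pos y).le]
  exact (le_abs_self _).trans ((hm y hy).trans (le_abs_self m))

/-- The bound `β < 1 / 4` excludes the second radial solution, which grows like `exp (|y|² / 4)`. -/
theorem DriftSystem.exists_sqrt_normSq_le (hsys : DriftSystem k c u B V S) {A β : ℝ}
    (hβ : β < 1 / 4) (hcrude : ∀ y, √(normSq u y) ≤ A * exp (β * tau y)) :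
    ∃ M : ℝ, ∀ y, √(normSq u y) ≤ M * tau y ^ c := by
  obtain ⟨γ, hγ, hγ'⟩ := exists_between (max_lt hβ (by norm_num : (0 : ℝ) < 1 / 4))
  rw [max_lt_iff] at hγ
  obtain ⟨C, hC0, hcompare⟩ := hsys.exists_sqrt_normSq_le_of_isBarrier
  obtain ⟨T, ψ, hψ, hbarrier⟩ := exists_isBarrier_rpow_add_exp n c hC0 hγ.2 hγ'
  obtain ⟨m, hm0, hm⟩ := exists_le_mul_tau_rpow_of_tau_le
    (contDiff_normSq hsys.contDiff).continuous.sqrt c T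
  set M := 1 + 2 * m
  have hM : 1 ≤ M := by linarith
  have hlow (t : ℝ) (ht : T ≤ t) : m * t ^ c ≤ M * ψ t ∧ 0 < M * ψ t := by
    obtain ⟨ht0, hψt, -⟩ := hψ t ht
    have hpos := rpow_pos_of_pos ht0 c
    constructor <;> nlinarith
  have hε (ε : ℝ) (hε : 0 < ε) (y : En n) (hy : T ≤ tau y) :
      √(normSq u y) ≤ M * ψ (tau y) + ε * exp (γ * tau y) := by
    obtain ⟨T₁, hT₁⟩ := exists_exp_le_mul_exp hγ.1 A hε
    refine hcompare T C _ (hbarrier M hM ε hε) le_rfl (fun t ht => ?_) (fun z hz => ?_)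
      ⟨max T T₁, fun z hz => ?_⟩ y hy
    · have := (hlow t ht).2
      positivity
    · exact (hm z hz.le).trans (le_add_of_le_of_nonneg (hlow _ hz.ge).1 (by positivity))
    · rw [max_le_iff] at hz
      exact (hcrude z).trans (le_add_of_nonneg_of_le (hlow _ hz.1).2.le (hT₁ _ hz.2))
  refine ⟨M, fun y => ?_⟩
  rcases le_total (tau y) T with hy | hy
  · exact (hm y hy).trans (mul_le_mul_of_nonneg_right (by linarith) (tau_rpow_pos c y).le)
  · have hψM : √(normSq u y) ≤ M * ψ (tau y) := le_of_forall_pos_le_add fun δ hδ => by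
      simpa using hε (δ / exp (γ * tau y)) (by positivity) y hy
    exact hψM.trans (mul_le_mul_of_nonneg_left (hψ _ hy).2.2 (by linarith))

end Comparison

section Bernstein

variable {n : ℕ}

theorem driftLap_sq_one_sub_div_tau (R : ℝ) (y : En n) :
    driftLap (fun z => (1 - tau z / R) ^ 2) y
      = 2 * (1 - tau y / R) * ((tau y - 1 - 2 * n) / R) + 8 * ((tau y - 1) / R ^ 2) := by
  have hderiv (t : ℝ) : HasDerivAt (fun t => (1 - t / R) ^ 2) (2 * (1 - t / R) * (-1 / R)) t := by
    refine ((((hasDerivAt_id t).div_const R).const_sub 1).pow 2).congr_deriv ?_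
    simp
    ring
  have hderiv' (t : ℝ) : HasDerivAt (fun t => 2 * (1 - t / R) * (-1 / R)) (2 / R ^ 2) t := by
    refine (((((hasDerivAt_id t).div_const R).const_sub 1).const_mul 2).mul_const
      (-1 / R)).congr_deriv ?_
    ring
  rw [driftLap_comp_tau (fun t _ => hderiv t) fun t _ => hderiv' t]
  ring

theorem sq_one_sub_div_tau_le_one {R : ℝ} {y : En n} (hR : 1 ≤ R) (hy : tau y ≤ R) :
    (1 - tau y / R) ^ 2 ≤ 1 := by
  have hR0 : 0 < R := one_pos.trans_le hR
  exact pow_le_one₀ (sub_nonneg.2 ((div_le_one hR0).2 hy))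
    (sub_le_self 1 (div_nonneg (tau_pos y).le hR0.le))

theorem neg_le_driftLap_sq_one_sub_div_tau {R : ℝ} {y : En n} (hR : 1 ≤ R) (hy : tau y ≤ R) :
    -(4 * n) ≤ driftLap (fun z => (1 - tau z / R) ^ 2) y := by
  have hR0 : 0 < R := one_pos.trans_le hR
  have hτ : 0 ≤ tau y - 1 := sub_nonneg.2 (one_le_tau y)
  have hη0 : 0 ≤ 1 - tau y / R := sub_nonneg.2 ((div_le_one hR0).2 hy)
  have hη1 : 1 - tau y / R ≤ 1 := sub_le_self 1 (div_nonneg (tau_pos y).le hR0.le)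
  have hn : 2 * n / R ≤ 2 * n := div_le_self (by positivity) hR
  have h₁ : 0 ≤ (tau y - 1) / R := by positivity
  have h₂ : 0 ≤ (tau y - 1) / R ^ 2 := by positivity
  rw [driftLap_sq_one_sub_div_tau, sub_div]
  nlinarith

theorem pder_sq_one_sub_div_tau (R : ℝ) (i : Fin n) (y : En n) :
    pder i (fun z => (1 - tau z / R) ^ 2) y = -2 * (1 - tau y / R) / R * pder i tau y := by
  have hderiv (t : ℝ) : HasDerivAt (fun t => (1 - t / R) ^ 2) (-2 * (1 - t / R) / R) t := by
    refine ((((hasDerivAt_id t).div_const R).const_sub 1).pow 2).congr_deriv ?_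
    simp
    ring
  exact pder_comp (hderiv _) (contDiff_tau.differentiable (by simp) y) i

theorem abs_sum_pder_sq_one_sub_div_tau_le {f : En n → ℝ} {y : En n} {R a b : ℝ} (hR : 1 ≤ R)
    (hy : tau y ≤ R) (ha : 0 ≤ a) (hb : 0 ≤ b) (hf : ∑ i, pder i f y ^ 2 ≤ 4 * a * b) :
    2 * |∑ i, pder i (fun z => (1 - tau z / R) ^ 2) y * pder i f y|
      ≤ (1 - tau y / R) ^ 2 * b + 64 * a := by
  set η := 1 - tau y / R
  have hgrad : ∑ i, pder i (fun z => (1 - tau z / R) ^ 2) y ^ 2 ≤ 16 * η ^ 2 := by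
    simp only [pder_sq_one_sub_div_tau, mul_pow, ← Finset.mul_sum, sum_pder_tau_sq]
    calc (-2 * η / R) ^ 2 * (4 * (tau y - 1)) = 16 * η ^ 2 * ((tau y - 1) / R ^ 2) := by ring
      _ ≤ 16 * η ^ 2 * 1 := by
        gcongr
        rw [div_le_one (by positivity)]
        nlinarith
      _ = 16 * η ^ 2 := mul_one _
  have hcs := (Finset.sum_mul_sq_le_sq_mul_sq Finset.univ
    (fun i => pder i (fun z => (1 - tau z / R) ^ 2) y) fun i => pder i f y).trans
    (mul_le_mul hgrad hf (by positivity) (by positivity))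
  refine le_of_sq_le_sq ?_ (by positivity)
  rw [mul_pow, sq_abs]
  nlinarith [sq_nonneg (η ^ 2 * b - 64 * a)]

/-- Three functions behaving like `|u|²`, `|∇u|²` and `|∇²u|²` for a solution `u` of a parabolic
system of size `√m` on `{τ ≤ R}`. -/
structure BernsteinTriple (C m R : ℝ) (f₀ f₁ f₂ : En n → ℝ) : Prop where
  contDiff₀ : ContDiff ℝ 2 f₀
  contDiff₁ : ContDiff ℝ 2 f₁
  nonneg₀ : ∀ y, 0 ≤ f₀ y
  nonneg₁ : ∀ y, 0 ≤ f₁ y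
  nonneg₂ : ∀ y, 0 ≤ f₂ y
  kato : ∀ y, ∑ i, pder i f₁ y ^ 2 ≤ 4 * f₁ y * f₂ y
  bound : ∀ y, tau y ≤ R → f₀ y ≤ m
  bochner₀ : ∀ y, tau y ≤ R → f₁ y - C * m ≤ driftLap f₀ y
  bochner₁ : ∀ y, tau y ≤ R → f₂ y - C * f₁ y - C * m ≤ driftLap f₁ y

namespace BernsteinTriple

variable {C m R A : ℝ} {f₀ f₁ f₂ : En n → ℝ} {y : En n}

theorem bound_nonneg (h : BernsteinTriple C m R f₀ f₁ f₂) (hy : tau y ≤ R) : 0 ≤ m :=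
  (h.nonneg₀ y).trans (h.bound y hy)

theorem le_driftLap (h : BernsteinTriple C m R f₀ f₁ f₂) (hC : 0 ≤ C) (hR : 1 ≤ R)
    (hA : C + 4 * n + 65 ≤ A) (hy : tau y ≤ R) :
    f₁ y - C * (1 + A) * m ≤ driftLap (fun z => (1 - tau z / R) ^ 2 * f₁ z + A * f₀ z) y := by
  have hη : ContDiff ℝ 2 fun z : En n => (1 - tau z / R) ^ 2 := by fun_prop
  have hf₀ := h.contDiff₀
  have hf₁ := h.contDiff₁
  have hcutoff := mul_le_mul_of_nonneg_right (neg_le_driftLap_sq_one_sub_div_tau hR hy)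
    (h.nonneg₁ y)
  have hcross := abs_sum_pder_sq_one_sub_div_tau_le hR hy (h.nonneg₁ y) (h.nonneg₂ y) (h.kato y)
  have hmain := mul_le_mul_of_nonneg_left (h.bochner₁ y hy) (sq_nonneg (1 - tau y / R))
  have hgood := mul_le_mul_of_nonneg_left (h.bochner₀ y hy) (show 0 ≤ A by linarith [hA])
  have hη1 : (1 - tau y / R) ^ 2 ≤ 1 := sq_one_sub_div_tau_le_one hR hy
  have habs := neg_abs_le (∑ i, pder i (fun z => (1 - tau z / R) ^ 2) y * pder i f₁ y)
  have hf₁A := mul_le_mul_of_nonneg_right hA (h.nonneg₁ y)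
  have hCf := mul_le_mul_of_nonneg_right hη1 (mul_nonneg hC (h.nonneg₁ y))
  have hCm := mul_le_mul_of_nonneg_right hη1 (mul_nonneg hC (h.bound_nonneg hy))
  rw [driftLap_add (by fun_prop) (by fun_prop), driftLap_mul hη hf₁, driftLap_const_mul hf₀]
  linarith

/-- Bernstein's gradient bound: apply the maximum principle to `η² f₁ + A f₀`, `η = 1 - τ / R`. -/
theorem sq_one_sub_div_tau_mul_le (h : BernsteinTriple C m R f₀ f₁ f₂) (hC : 0 ≤ C) (hR : 1 ≤ R)
    (hy : tau y ≤ R) : (1 - tau y / R) ^ 2 * f₁ y ≤ (C + 1) * (C + 4 * n + 66) * m := by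
  set A := C + 4 * n + 65
  have hA : 0 ≤ A := by positivity
  have hm := h.bound_nonneg hy
  set Q := fun z => (1 - tau z / R) ^ 2 * f₁ z + A * f₀ z
  have hQ : ContDiff ℝ 2 Q := by
    have := h.contDiff₀
    have := h.contDiff₁
    fun_prop
  obtain ⟨z, hz, hmax⟩ :=
    (isCompact_setOf_tau_le R).exists_isMaxOn ⟨y, hy⟩ hQ.continuous.continuousOn
  have hf₀z : A * f₀ z ≤ A * m := mul_le_mul_of_nonneg_left (h.bound z hz) hA
  have hQz : Q z ≤ (C + 1) * (1 + A) * m := by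
    rcases (show tau z ≤ R from hz).eq_or_lt with hzR | hzR
    · simp only [Q, hzR, div_self (one_pos.trans_le hR).ne', sub_self]
      have := mul_nonneg (mul_nonneg hC (add_nonneg zero_le_one hA)) hm
      linarith
    · have hloc : IsLocalMax Q z := by
        filter_upwards [contDiff_tau.continuous.continuousAt.eventually_lt_const hzR] with w hw
        exact hmax hw.le
      have hf₁z := (h.le_driftLap hC hR le_rfl hz).trans (driftLap_nonpos_of_isLocalMax hQ hloc)
      have := mul_le_mul_of_nonneg_right (sq_one_sub_div_tau_le_one hR hz) (h.nonneg₁ z)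
      simp only [Q]
      linarith
  have hyz : Q y ≤ Q z := hmax hy
  have := mul_nonneg hA (h.nonneg₀ y)
  calc (1 - tau y / R) ^ 2 * f₁ y ≤ Q y := le_add_of_nonneg_right this
    _ ≤ (C + 1) * (1 + A) * m := hyz.trans hQz
    _ = _ := by ring

end BernsteinTriple

theorem tau_rpow_le_rpow {p q R : ℝ} {y : En n} (hpq : p ≤ q) (hq : 0 ≤ q) (hy : tau y ≤ R) :
    tau y ^ p ≤ R ^ q :=
  (rpow_le_rpow_of_exponent_le (one_le_tau y) hpq).trans (rpow_le_rpow (tau_pos y).le hy hq)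

theorem exists_rpow_le_mul_exp (p : ℝ) {β : ℝ} (hβ : 0 < β) :
    ∃ A : ℝ, ∀ t, 1 ≤ t → t ^ p ≤ A * exp (β * t) := by
  set ε := β / (|p| + 1)
  have hε : 0 < ε := by positivity
  refine ⟨exp (-(|p| * log ε)), fun t ht => ?_⟩
  have ht0 : 0 < t := one_pos.trans_le ht
  rw [rpow_def_of_pos ht0, ← exp_add, exp_le_exp]
  have hlog : log t ≤ ε * t - log ε := by
    have := log_le_sub_one_of_pos (mul_pos hε ht0)
    rw [log_mul hε.ne' ht0.ne'] at this
    linarith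
  have hpε : |p| * ε ≤ β := by
    rw [mul_div_assoc', div_le_iff₀ (by positivity)]
    nlinarith
  calc log t * p ≤ log t * |p| := mul_le_mul_of_nonneg_left (le_abs_self p) (log_nonneg ht)
    _ ≤ (ε * t - log ε) * |p| := mul_le_mul_of_nonneg_right hlog (abs_nonneg p)
    _ = |p| * ε * t - |p| * log ε := by ring
    _ ≤ β * t - |p| * log ε := by gcongr
    _ = _ := by ring

variable {k k' : ℕ} {ι : Type*} [Fintype ι] {c c' : ℝ} {u : ι → En n → ℝ}
  {B : ι → Fin n → ι → En n → ℝ} {V : ι → ι → En n → ℝ} {S : ι → En n → ℝ}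

theorem normSq_le_of_sqrt_normSq_le {M : ℝ} {y : En n} (h : √(normSq u y) ≤ M * tau y ^ c) :
    normSq u y ≤ M ^ 2 * tau y ^ (2 * c) := by
  have hsq := pow_le_pow_left₀ (sqrt_nonneg _) h 2
  rwa [sq_sqrt (normSq_nonneg u y), mul_pow, ← rpow_natCast (tau y ^ c), ← rpow_mul (tau_pos y).le,
    Nat.cast_ofNat, mul_comm c] at hsq

namespace DriftSystem

theorem exists_le_driftLap_normSq_rpow (h : DriftSystem k c u B V S) : ∃ C : ℝ, 0 ≤ C ∧ ∀ y,
    gradNormSq u y - C * normSq u y - C * tau y ^ (2 * c - 2)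
      ≤ driftLap (fun y => normSq u y) y := by
  obtain ⟨C, hC0, hC⟩ := h.exists_le_driftLap_normSq
  obtain ⟨D, -, hD⟩ := h.exists_source_le
  refine ⟨C + 1 + D ^ 2, by positivity, fun y => ?_⟩
  have hτ : tau y ^ (2 * c - 2) = (tau y ^ (c - 1)) ^ 2 := by
    rw [← rpow_natCast, ← rpow_mul (tau_pos y).le]
    norm_num
    ring_nf
  have hf := normSq_nonneg u y
  have hsource : 2 * |∑ a, u a y * S a y| ≤ normSq u y + D ^ 2 * tau y ^ (2 * c - 2) := by
    rw [hτ]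
    nlinarith [hD y, sq_nonneg (√(normSq u y) - D * tau y ^ (c - 1)), sq_sqrt hf]
  have := mul_nonneg (sq_nonneg D) hf
  have := mul_nonneg (add_nonneg hC0 zero_le_one) (tau_rpow_pos (2 * c - 2) y).le
  linarith [hC y]

theorem exists_bernsteinTriple {B' : Fin n × ι → Fin n → Fin n × ι → En n → ℝ}
    {V' : Fin n × ι → Fin n × ι → En n → ℝ} {S' : Fin n × ι → En n → ℝ}
    (h : DriftSystem k c u B V S) (hgrad : DriftSystem k' c' (gradFamily u) B' V' S')
    (hc' : c' ≤ c) {M : ℝ} (hM : ∀ y, √(normSq u y) ≤ M * tau y ^ c) :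
    ∃ C : ℝ, 0 ≤ C ∧ ∀ R, BernsteinTriple C ((M ^ 2 + 1) * R ^ (2 * |c|)) R
      (fun y => normSq u y) (fun y => gradNormSq u y) (fun y => gradNormSq (gradFamily u) y) := by
  obtain ⟨C₁, hC₁0, hC₁⟩ := h.exists_le_driftLap_normSq_rpow
  obtain ⟨C₂, hC₂0, hC₂⟩ := hgrad.exists_le_driftLap_normSq_rpow
  simp only [normSq_gradFamily] at hC₂
  refine ⟨C₁ + C₂, by positivity, fun R => ?_⟩
  have hP (y : En n) (hy : tau y ≤ R) : 0 ≤ R ^ (2 * |c|) :=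
    rpow_nonneg ((tau_pos y).le.trans hy) _
  have hm (y : En n) (hy : tau y ≤ R) : 0 ≤ (M ^ 2 + 1) * R ^ (2 * |c|) :=
    mul_nonneg (by positivity) (hP y hy)
  have hcabs := le_abs_self c
  have hbound (y : En n) (hy : tau y ≤ R) : normSq u y ≤ M ^ 2 * R ^ (2 * |c|) :=
    (normSq_le_of_sqrt_normSq_le (hM y)).trans
      (mul_le_mul_of_nonneg_left (tau_rpow_le_rpow (by linarith) (by positivity) hy) (sq_nonneg M))
  refine ⟨contDiff_two_of_infty (contDiff_normSq h.contDiff), ?_, normSq_nonneg u,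
    gradNormSq_nonneg u, gradNormSq_nonneg _, ?_, fun y hy => ?_, fun y hy => ?_, fun y hy => ?_⟩
  · simpa only [normSq_gradFamily] using contDiff_two_of_infty (contDiff_normSq hgrad.contDiff)
  · simpa only [normSq_gradFamily] using
      sum_pder_normSq_sq_le fun p => contDiff_two_of_infty (hgrad.contDiff p)
  · linarith [hbound y hy, hP y hy]
  · have hτ := tau_rpow_le_rpow (p := 2 * c - 2) (q := 2 * |c|) (by linarith) (by positivity) hy
    have := mul_nonneg hC₂0 (hm y hy)
    linarith [hC₁ y, mul_le_mul_of_nonneg_left (add_le_add (hbound y hy) hτ) hC₁0]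
  · have hτ := tau_rpow_le_rpow (p := 2 * c' - 2) (q := 2 * |c|) (by linarith) (by positivity) hy
    have := mul_nonneg hC₁0 (hm y hy)
    have := mul_nonneg hC₁0 (gradNormSq_nonneg u y)
    have := mul_nonneg hC₂0 (mul_nonneg (sq_nonneg M) (hP y hy))
    linarith [hC₂ y, mul_le_mul_of_nonneg_left hτ hC₂0]

theorem exists_sqrt_gradNormSq_le_exp {B' : Fin n × ι → Fin n → Fin n × ι → En n → ℝ}
    {V' : Fin n × ι → Fin n × ι → En n → ℝ} {S' : Fin n × ι → En n → ℝ}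
    (h : DriftSystem k c u B V S) (hgrad : DriftSystem k' c' (gradFamily u) B' V' S')
    (hc' : c' ≤ c) {M : ℝ} (hM : ∀ y, √(normSq u y) ≤ M * tau y ^ c) {β : ℝ} (hβ : 0 < β) :
    ∃ A : ℝ, ∀ y, √(gradNormSq u y) ≤ A * exp (β * tau y) := by
  obtain ⟨C, hC0, hC⟩ := h.exists_bernsteinTriple hgrad hc' hM
  obtain ⟨A, hA⟩ := exists_rpow_le_mul_exp (|c|) hβ
  set K := 4 * ((C + 1) * (C + 4 * n + 66) * ((M ^ 2 + 1) * 2 ^ (2 * |c|)))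
  have hK : 0 ≤ K := by positivity
  refine ⟨√K * A, fun y => ?_⟩
  have hτ := one_le_tau y
  have hτ0 := tau_pos y
  have hbern := (hC (2 * tau y)).sq_one_sub_div_tau_mul_le hC0 (by linarith)
    (show tau y ≤ 2 * tau y by linarith)
  have hhalf : (1 - tau y / (2 * tau y)) ^ 2 = 1 / 4 := by
    field_simp
    norm_num
  rw [hhalf, mul_rpow two_pos.le hτ0.le] at hbern
  have hgradle : gradNormSq u y ≤ K * (tau y ^ |c|) ^ 2 := by
    rw [← rpow_natCast (tau y ^ |c|), ← rpow_mul hτ0.le, Nat.cast_ofNat, mul_comm |c|]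
    simp only [K]
    linarith
  calc √(gradNormSq u y) ≤ √(K * (tau y ^ |c|) ^ 2) := sqrt_le_sqrt hgradle
    _ = √K * tau y ^ |c| := by rw [sqrt_mul hK, sqrt_sq (tau_rpow_pos _ y).le]
    _ ≤ √K * (A * exp (β * tau y)) := by gcongr; exact hA _ hτ
    _ = _ := (mul_assoc _ _ _).symm

theorem isSymbol (h : DriftSystem k c u B V S) {A β : ℝ} (hβ : β < 1 / 4)
    (hcrude : ∀ y, √(normSq u y) ≤ A * exp (β * tau y)) (a : ι) : IsSymbol k c (u a) := by
  induction k generalizing ι c A β with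
  | zero =>
    obtain ⟨M, hM⟩ := h.exists_sqrt_normSq_le hβ hcrude
    exact .of_bound (h.contDiff a) ⟨M, fun y => (abs_le_sqrt_normSq u a y).trans (hM y)⟩
  | succ k ih =>
    obtain ⟨M, hM⟩ := h.exists_sqrt_normSq_le hβ hcrude
    have hgrad := h.deriv fun b => ih h.mono hβ hcrude b
    obtain ⟨A', hA'⟩ := h.exists_sqrt_gradNormSq_le_exp hgrad (by linarith) hM
      (show (0 : ℝ) < 1 / 8 by norm_num)
    simp only [← normSq_gradFamily] at hA'
    exact .of_pder (h.contDiff a) ⟨M, fun y => (abs_le_sqrt_normSq u a y).trans (hM y)⟩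
      fun i => ih hgrad (by norm_num) hA' (i, a)

end DriftSystem

end Bernstein

section MeanValue

variable {n : ℕ} {f : En n → ℝ}

/-- A compactly supported profile `K` with `∇K = -x k`, used to average over dilated balls. -/
structure RadialKernel (K k : En n → ℝ) : Prop where
  contDiff : ContDiff ℝ ∞ K
  continuous : Continuous k
  pder_eq : ∀ i x, pder i K x = -(x i * k x)
  nonneg : ∀ x, 0 ≤ K x
  le : ∀ x, K x ≤ k x
  eq_zero : ∀ x, 1 ≤ ‖x‖ → k x = 0
  pos : 0 < k 0

theorem exists_radialKernel (n : ℕ) : ∃ K k : En n → ℝ, RadialKernel K k := by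
  set η : En n → ℝ := fun x => 1 - ‖x‖ ^ 2
  have hη : ContDiff ℝ ∞ η := contDiff_const.sub contDiff_norm_sq_infty
  have hnonneg (x : En n) : 0 ≤ expNegInvGlue (η x) := expNegInvGlue.nonneg _
  refine ⟨fun x => expNegInvGlue (η x), fun x => 2 * ((η x)⁻¹ ^ 2 * expNegInvGlue (η x)),
    expNegInvGlue.contDiff.comp hη, ?_, fun i x => ?_, hnonneg, fun x => ?_, fun x hx => ?_, ?_⟩
  · have h := (expNegInvGlue.contDiff_polynomial_eval_inv_mul (n := 0)
      (Polynomial.X ^ 2)).continuous.comp hη.continuous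
    simp only [Polynomial.eval_pow, Polynomial.eval_X, Function.comp_def] at h
    exact continuous_const.mul h
  · have h := expNegInvGlue.hasDerivAt_polynomial_eval_inv_mul 1 (η x)
    simp only [Polynomial.eval_one, one_mul, Polynomial.derivative_one, sub_zero, mul_one,
      Polynomial.eval_pow, Polynomial.eval_X] at h
    rw [pder_comp h (hη.differentiable (by simp) x),
      pder_sub (by fun_prop) (contDiff_norm_sq_infty.differentiable (by simp) x), pder_const,
      pder_norm_sq]
    ring
  · rcases le_or_gt (η x) 0 with h | h
    · simp [expNegInvGlue.zero_of_nonpos h]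
    · have hinv : 1 ≤ (η x)⁻¹ ^ 2 :=
        one_le_pow₀ ((one_le_inv₀ h).2 (sub_le_self 1 (sq_nonneg ‖x‖)))
      nlinarith [hnonneg x]
  · simp [show η x ≤ 0 from sub_nonpos.2 (one_le_pow₀ hx)]
  · simp [η, expNegInvGlue.pos_of_pos one_pos]

theorem integrable_mul_of_hasCompactSupport {g k : En n → ℝ} (hg : Continuous g)
    (hk : Continuous k) (hc : HasCompactSupport k) : Integrable fun x => g x * k x :=
  (hg.mul hk).integrable_of_hasCompactSupport hc.mul_left

theorem integral_mul_pder_eq_neg {g K : En n → ℝ} (hg : ContDiff ℝ ∞ g) (hK : ContDiff ℝ ∞ K)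
    (hc : HasCompactSupport K) (i : Fin n) :
    ∫ x, g x * pder i K x = -∫ x, pder i g x * K x :=
  integral_mul_fderiv_eq_neg_fderiv_mul_of_integrable
    (integrable_mul_of_hasCompactSupport (contDiff_pder hg i).continuous hK.continuous hc)
    (integrable_mul_of_hasCompactSupport hg.continuous (contDiff_pder hK i).continuous
      (hc.fderiv_apply ℝ _))
    (integrable_mul_of_hasCompactSupport hg.continuous hK.continuous hc)
    (fun x _ => hg.differentiable (by simp) x) (fun x _ => hK.differentiable (by simp) x)

theorem contDiff_comp_add_smul (hf : ContDiff ℝ ∞ f) (y : En n) (s : ℝ) :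
    ContDiff ℝ ∞ fun x => f (y + s • x) :=
  hf.comp (contDiff_const.add (contDiff_const_smul s))

theorem pder_comp_add_smul (hf : Differentiable ℝ f) (y : En n) (s : ℝ) (i : Fin n) (x : En n) :
    pder i (fun x => f (y + s • x)) x = s * pder i f (y + s • x) := by
  have hline : HasFDerivAt (fun x : En n => y + s • x) (s • ContinuousLinearMap.id ℝ (En n)) x :=
    ((hasFDerivAt_id x).const_smul s).const_add y
  have h := ((hf (y + s • x)).hasFDerivAt.comp x hline).fderiv
  simp only [Function.comp_def] at h
  simp [pder, h]

namespace RadialKernel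

variable {K k : En n → ℝ}

theorem nonneg_right (h : RadialKernel K k) (x : En n) : 0 ≤ k x :=
  (h.nonneg x).trans (h.le x)

theorem hasCompactSupport_right (h : RadialKernel K k) : HasCompactSupport k :=
  .intro (isCompact_closedBall 0 1) fun x hx =>
    h.eq_zero x (not_le.1 (mem_closedBall_zero_iff.not.1 hx)).le

theorem hasCompactSupport_left (h : RadialKernel K k) : HasCompactSupport K :=
  h.hasCompactSupport_right.mono fun x hx hk => hx (le_antisymm ((h.le x).trans hk.le) (h.nonneg x))

theorem integral_pos (h : RadialKernel K k) : 0 < ∫ x, k x :=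
  h.continuous.integral_pos_of_hasCompactSupport_nonneg_nonzero h.hasCompactSupport_right
    h.nonneg_right h.pos.ne'

theorem exists_le (h : RadialKernel K k) : ∃ M : ℝ, 0 ≤ M ∧ ∀ x, k x ≤ M := by
  obtain ⟨M, hM⟩ := h.continuous.bounded_above_of_compact_support h.hasCompactSupport_right
  exact ⟨M, (norm_nonneg _).trans (hM 0), fun x => (le_abs_self _).trans (hM x)⟩

theorem hasDerivAt_integral (h : RadialKernel K k) (hf : ContDiff ℝ ∞ f) (y : En n) (s : ℝ) :
    HasDerivAt (fun s => ∫ x, f (y + s • x) * k x) (∫ x, fderiv ℝ f (y + s • x) x * k x) s := by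
  have hcont : Continuous fun p : ℝ × En n => fderiv ℝ f (y + p.1 • p.2) p.2 * k p.2 :=
    (((hf.continuous_fderiv (by simp)).comp
      (continuous_const.add (continuous_fst.smul continuous_snd))).clm_apply continuous_snd).mul
      (h.continuous.comp continuous_snd)
  obtain ⟨M, hM⟩ := ((isCompact_closedBall s 1).prod
    (isCompact_closedBall (0 : En n) 1)).exists_bound_of_continuousOn hcont.continuousOn
  have hint (s : ℝ) : Integrable fun x => f (y + s • x) * k x :=
    integrable_mul_of_hasCompactSupport (contDiff_comp_add_smul hf y s).continuous h.continuous
      h.hasCompactSupport_right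
  refine (hasDerivAt_integral_of_dominated_loc_of_deriv_le (μ := volume)
    (bound := (closedBall (0 : En n) 1).indicator fun _ => M) (closedBall_mem_nhds s one_pos)
    (.of_forall fun s => (hint s).aestronglyMeasurable) (hint s)
    (hcont.comp (continuous_const.prodMk continuous_id)).aestronglyMeasurable
    (.of_forall fun x t ht => ?_)
    ((integrable_indicator_iff measurableSet_closedBall).2
      (integrableOn_const measure_closedBall_lt_top.ne))
    (.of_forall fun x t _ =>
      (hasDerivAt_line (hf.differentiable (by simp) _)).mul_const (k x))).2
  by_cases hx : x ∈ closedBall (0 : En n) 1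
  · rw [indicator_of_mem hx]
    exact hM (t, x) ⟨ht, hx⟩
  · rw [indicator_of_notMem hx, h.eq_zero x (not_le.1 (mem_closedBall_zero_iff.not.1 hx)).le]
    simp

theorem integral_fderiv_mul_eq (h : RadialKernel K k) (hf : ContDiff ℝ ∞ f) (y : En n) (s : ℝ) :
    ∫ x, fderiv ℝ f (y + s • x) x * k x = s * ∫ x, lapS f (y + s • x) * K x := by
  have hpder (i : Fin n) := contDiff_comp_add_smul (contDiff_pder hf i) y s
  have hleft (x : En n) : fderiv ℝ f (y + s • x) x * k x
      = ∑ i, -(pder i f (y + s • x) * pder i K x) := by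
    simp only [fderiv_apply_eq_sum_pder, h.pder_eq, Finset.sum_mul]
    exact Finset.sum_congr rfl fun i _ => by ring
  have hright (x : En n) : s * (lapS f (y + s • x) * K x)
      = ∑ i, pder i (fun x => pder i f (y + s • x)) x * K x := by
    simp only [lapS, Finset.sum_mul, Finset.mul_sum, ← mul_assoc]
    refine Finset.sum_congr rfl fun i _ => ?_
    rw [pder_comp_add_smul ((contDiff_pder hf i).differentiable (by simp))]
  rw [← integral_const_mul]
  simp only [hleft, hright]
  rw [integral_finsetSum _ fun i _ => ?_, integral_finsetSum _ fun i _ => ?_]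
  · refine Finset.sum_congr rfl fun i _ => ?_
    rw [integral_neg, integral_mul_pder_eq_neg (hpder i) h.contDiff h.hasCompactSupport_left,
      neg_neg]
  · exact integrable_mul_of_hasCompactSupport (contDiff_pder (hpder i) i).continuous
      h.contDiff.continuous h.hasCompactSupport_left
  · exact (integrable_mul_of_hasCompactSupport (hpder i).continuous
      (contDiff_pder h.contDiff i).continuous (h.hasCompactSupport_left.fderiv_apply ℝ _)).neg

theorem neg_mul_integral_le (h : RadialKernel K k) (hf : ContDiff ℝ ∞ f) (hf0 : ∀ y, 0 ≤ f y)
    {C : ℝ} (hC : 0 ≤ C) (hlap : ∀ y, -(C * f y) ≤ lapS f y) (y : En n) {s : ℝ}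
    (hs : s ∈ Icc (0 : ℝ) 1) :
    -(C * ∫ x, f (y + s • x) * k x) ≤ ∫ x, fderiv ℝ f (y + s • x) x * k x := by
  have hfs := (contDiff_comp_add_smul hf y s).continuous
  rw [h.integral_fderiv_mul_eq hf, ← integral_const_mul, ← integral_const_mul, ← integral_neg]
  refine integral_mono
    ((integrable_mul_of_hasCompactSupport hfs h.continuous h.hasCompactSupport_right).const_mul
      C).neg
    ((integrable_mul_of_hasCompactSupport
      (contDiff_comp_add_smul (contDiff_lapS hf) y s).continuous h.contDiff.continuous
      h.hasCompactSupport_left).const_mul s) fun x => ?_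
  have hCf : 0 ≤ C * f (y + s • x) := mul_nonneg hC (hf0 _)
  have hsK : s * K x ≤ k x := (mul_le_of_le_one_left (h.nonneg x) hs.2).trans (h.le x)
  have := mul_le_mul_of_nonneg_right (hlap (y + s • x)) (mul_nonneg hs.1 (h.nonneg x))
  have := mul_le_mul_of_nonneg_left hsK hCf
  change -(C * (f (y + s • x) * k x)) ≤ s * (lapS f (y + s • x) * K x)
  linarith

/-- The average `I s` over the dilated ball satisfies `I' ≥ -C I`. -/
theorem mul_integral_le (h : RadialKernel K k) (hf : ContDiff ℝ ∞ f) (hf0 : ∀ y, 0 ≤ f y)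
    {C : ℝ} (hC : 0 ≤ C) (hlap : ∀ y, -(C * f y) ≤ lapS f y) (y : En n) :
    f y * ∫ x, k x ≤ exp C * ∫ x, f (y + x) * k x := by
  set I := fun s : ℝ => ∫ x, f (y + s • x) * k x
  have hderiv (s : ℝ) : HasDerivAt (fun s => exp (C * s) * I s)
      (exp (C * s) * (C * I s + ∫ x, fderiv ℝ f (y + s • x) x * k x)) s := by
    refine (((hasDerivAt_const_mul C).exp.mul (h.hasDerivAt_integral hf y s))).congr_deriv ?_
    ring
  have hmono : MonotoneOn (fun s => exp (C * s) * I s) (Icc 0 1) := by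
    refine monotoneOn_of_deriv_nonneg (convex_Icc 0 1)
      (fun s _ => (hderiv s).continuousAt.continuousWithinAt)
      (fun s _ => (hderiv s).differentiableAt.differentiableWithinAt) fun s hs => ?_
    rw [(hderiv s).deriv]
    have := h.neg_mul_integral_le hf hf0 hC hlap y (interior_subset hs)
    exact mul_nonneg (exp_pos _).le (by linarith)
  have := hmono (left_mem_Icc.2 zero_le_one) (right_mem_Icc.2 zero_le_one) zero_le_one
  simpa [I, integral_const_mul] using this

end RadialKernel

end MeanValue

section CrudeBound

variable {n : ℕ} {f : En n → ℝ}

theorem contDiff_exp_neg_tau : ContDiff ℝ 2 fun y : En n => exp (-tau y / 8) := by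
  fun_prop

theorem pder_exp_neg_tau (i : Fin n) (y : En n) :
    pder i (fun z => exp (-tau z / 8)) y = -1 / 4 * (y i * exp (-tau y / 8)) := by
  have hφ (t : ℝ) : HasDerivAt (fun t => exp (-t / 8)) (exp (-t / 8) * (-1 / 8)) t :=
    ((hasDerivAt_neg t).div_const 8).exp
  rw [pder_comp (hφ _) (contDiff_tau.differentiable (by simp) y), pder_tau]
  ring

theorem lapS_exp_neg_tau (y : En n) :
    lapS (fun z => exp (-tau z / 8)) y = exp (-tau y / 8) * ((tau y - 1) / 16 - n / 4) := by
  have hpder₂ (i : Fin n) : pder i (fun z => pder i (fun w => exp (-tau w / 8)) z) y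
      = exp (-tau y / 8) / 16 * y i ^ 2 - exp (-tau y / 8) / 4 := by
    have hcoord : DifferentiableAt ℝ (fun z : En n => z i) y := by fun_prop
    have hexp := contDiff_exp_neg_tau.differentiable (by simp) y
    have hprod : DifferentiableAt ℝ (fun z : En n => z i * exp (-tau z / 8)) y := hcoord.mul hexp
    simp only [pder_exp_neg_tau]
    rw [pder_const_mul hprod, pder_mul hcoord hexp, pder_coord, if_pos rfl, pder_exp_neg_tau]
    ring
  rw [lapS, Finset.sum_congr rfl fun i _ => hpder₂ i, ← norm_sq_eq_tau_sub_one, ← sum_coord_sq,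
    Finset.sum_sub_distrib, ← Finset.mul_sum, Finset.sum_const, Finset.card_univ,
    Fintype.card_fin, nsmul_eq_mul]
  ring

theorem lapS_exp_neg_tau_mul (hf : ContDiff ℝ 2 f) (y : En n) :
    lapS (fun z => exp (-tau z / 8) * f z) y
      = exp (-tau y / 8) * (driftLap f y + ((tau y - 1) / 16 - n / 4) * f y) := by
  have hcross : ∑ i, pder i (fun z => exp (-tau z / 8)) y * pder i f y
      = -1 / 4 * exp (-tau y / 8) * ∑ i, y i * pder i f y := by
    rw [Finset.mul_sum]
    exact Finset.sum_congr rfl fun i _ => by rw [pder_exp_neg_tau]; ring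
  rw [lapS_mul contDiff_exp_neg_tau hf, lapS_exp_neg_tau, hcross, driftLap]
  ring

theorem RadialKernel.integral_exp_neg_tau_mul_le {K k : En n → ℝ} (hK : RadialKernel K k) {M : ℝ}
    (hM : ∀ x, k x ≤ M) (hf : Continuous f) (hf0 : ∀ y, 0 ≤ f y)
    (hint : Integrable fun y => f y * gauss y) (y : En n) :
    ∫ x, exp (-tau (y + x) / 8) * f (y + x) * k x
      ≤ M * exp (tau y / 4) * ∫ z, f z * gauss z := by
  have hpoint (x : En n) : exp (-tau (y + x) / 8) * f (y + x) * k x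
      ≤ M * exp (tau y / 4) * (f (y + x) * gauss (y + x)) := by
    have hfg : 0 ≤ f (y + x) * gauss (y + x) := mul_nonneg (hf0 _) (exp_pos _).le
    have hM0 : 0 ≤ M := (hK.nonneg_right x).trans (hM x)
    rcases le_or_gt 1 ‖x‖ with hx | hx
    · rw [hK.eq_zero x hx, mul_zero]
      positivity
    · have hnorm : ‖y + x‖ ^ 2 ≤ 2 * tau y := by
        have := pow_le_pow_left₀ (norm_nonneg _)
          ((norm_add_le y x).trans (add_le_add_right hx.le _)) 2
        simp only [tau]
        nlinarith [sq_nonneg (‖y‖ - 1)]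
      have hexp : exp (-tau (y + x) / 8) ≤ exp (tau y / 4) * gauss (y + x) := by
        rw [gauss, ← exp_add]
        refine exp_le_exp.2 ?_
        simp only [tau] at hnorm ⊢
        linarith
      calc exp (-tau (y + x) / 8) * f (y + x) * k x
          ≤ exp (tau y / 4) * gauss (y + x) * f (y + x) * M :=
            mul_le_mul (mul_le_mul_of_nonneg_right hexp (hf0 _)) (hM x) (hK.nonneg_right x)
              (by rw [mul_assoc, mul_comm (gauss _)]; positivity)
        _ = _ := by ring
  have hcont : Continuous fun x => exp (-tau (y + x) / 8) * f (y + x) := by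
    have := (contDiff_tau (n := n)).continuous
    fun_prop
  refine (integral_mono (integrable_mul_of_hasCompactSupport hcont hK.continuous
    hK.hasCompactSupport_right) ((hint.comp_add_left y).const_mul _) hpoint).trans_eq ?_
  rw [integral_const_mul, integral_add_left_eq_self fun z => f z * gauss z]

/-- The ground-state transform `f ↦ exp (-τ / 8) f` turns `driftLap` into a Schrödinger operator
with potential bounded below, so that the mean value inequality holds with a uniform constant. -/
theorem exists_le_exp_of_integrable_mul_gauss (hf : ContDiff ℝ ∞ f) (hf0 : ∀ y, 0 ≤ f y) {C : ℝ}
    (hC : 0 ≤ C) (hdrift : ∀ y, -(C * f y) ≤ driftLap f y)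
    (hint : Integrable fun y => f y * gauss y) :
    ∃ A : ℝ, 0 ≤ A ∧ ∀ y, f y ≤ A * exp (3 / 8 * tau y) := by
  obtain ⟨K, k, hK⟩ := exists_radialKernel n
  obtain ⟨M, hM0, hM⟩ := hK.exists_le
  set g : En n → ℝ := fun y => exp (-tau y / 8) * f y
  have hg : ContDiff ℝ ∞ g := by fun_prop
  have hg0 (y : En n) : 0 ≤ g y := mul_nonneg (exp_pos _).le (hf0 y)
  have hlap (y : En n) : -((C + n / 4) * g y) ≤ lapS g y := by
    rw [lapS_exp_neg_tau_mul (contDiff_two_of_infty hf)]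
    have hpot := mul_nonneg (sub_nonneg.2 (one_le_tau y)) (hf0 y)
    have := mul_le_mul_of_nonneg_left
      (show -((C + n / 4) * f y) ≤ driftLap f y + ((tau y - 1) / 16 - n / 4) * f y by
        linarith [hdrift y]) (exp_pos (-tau y / 8)).le
    linarith
  have hJ : 0 ≤ ∫ z, f z * gauss z := integral_nonneg fun z => mul_nonneg (hf0 z) (exp_pos _).le
  refine ⟨exp (C + n / 4) * M * (∫ z, f z * gauss z) / ∫ x, k x,
    div_nonneg (by positivity) hK.integral_pos.le, fun y => ?_⟩
  have hgy : g y ≤ exp (C + n / 4) * (M * exp (tau y / 4) * ∫ z, f z * gauss z) / ∫ x, k x :=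
    (le_div_iff₀ hK.integral_pos).2 ((hK.mul_integral_le hg hg0 (by positivity) hlap y).trans
      (mul_le_mul_of_nonneg_left
        (hK.integral_exp_neg_tau_mul_le hM hf.continuous hf0 hint y) (exp_pos _).le))
  have hexp : exp (3 / 8 * tau y) = exp (tau y / 8) * exp (tau y / 4) := by
    rw [← exp_add]
    congr 1
    ring
  calc f y = exp (tau y / 8) * g y := by
        rw [← mul_assoc, ← exp_add, neg_div, add_neg_cancel, exp_zero, one_mul]
    _ ≤ _ := mul_le_mul_of_nonneg_left hgy (exp_pos _).le
    _ = _ := by rw [hexp]; ring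

theorem DriftSystem.exists_sqrt_normSq_le_exp {ι : Type*} [Fintype ι] {k : ℕ} {c : ℝ}
    {u : ι → En n → ℝ} {B : ι → Fin n → ι → En n → ℝ} {V : ι → ι → En n → ℝ}
    (h : DriftSystem k c u B V fun _ _ => 0) (hint : Integrable fun y => normSq u y * gauss y) :
    ∃ A : ℝ, ∀ y, √(normSq u y) ≤ A * exp (3 / 16 * tau y) := by
  obtain ⟨C, hC, hbochner⟩ := h.exists_le_driftLap_normSq
  have hdrift (y : En n) : -(C * normSq u y) ≤ driftLap (fun z => normSq u z) y := by
    have := hbochner y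
    simp only [mul_zero, Finset.sum_const_zero, abs_zero] at this
    linarith [gradNormSq_nonneg u y]
  obtain ⟨A, hA, hle⟩ := exists_le_exp_of_integrable_mul_gauss (contDiff_normSq h.contDiff)
    (normSq_nonneg u) hC hdrift hint
  refine ⟨√A, fun y => (sqrt_le_sqrt (hle y)).trans_eq ?_⟩
  rw [sqrt_mul hA, ← exp_half, show 3 / 8 * tau y / 2 = 3 / 16 * tau y by ring]

end CrudeBound

section EigenSystem

variable {n : ℕ}

theorem aC_pos (hn : 5 ≤ n) : 0 < aC n := by
  have : (5 : ℝ) ≤ n := by exact_mod_cast hn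
  have : 0 < √((n : ℝ) - 2) := sqrt_pos.2 (by linarith)
  unfold aC
  positivity

theorem bC_pos (hn : 5 ≤ n) (hn' : n ≤ 9) : 0 < bC n := by
  have h5 : (5 : ℝ) ≤ n := by exact_mod_cast hn
  have h9 : (n : ℝ) ≤ 9 := by exact_mod_cast hn'
  have hsqrt : √(2 * (n : ℝ) - 4) < (6 * n - 12) / (n + 2) := by
    rw [sqrt_lt' (by apply div_pos <;> linarith), div_pow, lt_div_iff₀ (by positivity)]
    have : 0 < (n - 2 : ℝ) * ((n - 4) * (10 - n)) :=
      mul_pos (by linarith) (mul_pos (by linarith) (by linarith))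
    nlinarith
  rw [lt_div_iff₀ (by positivity)] at hsqrt
  unfold bC
  linarith

/-- The matrix of `X ↦ [A, X]` in the basis of elementary matrices. -/
def adMatrix (A : Mat n) (p q : Fin n × Fin n) : ℝ :=
  (if q.2 = p.2 then A p.1 q.1 else 0) - (if q.1 = p.1 then A q.2 p.2 else 0)

theorem brkt_eq_sum_adMatrix (A X : Mat n) (p : Fin n × Fin n) :
    brkt A X p.1 p.2 = ∑ q, adMatrix A p q * X q.1 q.2 := by
  simp only [brkt, adMatrix, sub_mul, Finset.sum_sub_distrib, Fintype.sum_prod_type]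
  congr 1
  · simp
  · rw [Finset.sum_comm]
    simp [mul_comm]

theorem brkt_brkt_eq_sum_adMatrix (A X : Mat n) (p : Fin n × Fin n) :
    brkt A (brkt A X) p.1 p.2 = ∑ q, (∑ r, adMatrix A p r * adMatrix A r q) * X q.1 q.2 := by
  simp only [brkt_eq_sum_adMatrix, Finset.mul_sum, Finset.sum_mul]
  rw [Finset.sum_comm]
  simp only [mul_assoc]

theorem brkt_swap (A X : Mat n) (μ ν : Fin n) : brkt X A μ ν = -brkt A X μ ν := by
  simp only [brkt, ← Finset.sum_neg_distrib, neg_sub]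

theorem IsSymbol.adMatrix {k : ℕ} {p : ℝ} {A : En n → Mat n}
    (hA : ∀ μ ν, IsSymbol k p fun y => A y μ ν) (a b : Fin n × Fin n) :
    IsSymbol k p fun y => adMatrix (A y) a b :=
  (hA _ _).ite.sub (hA _ _).ite

theorem IsSymbol.brkt {k : ℕ} {p q : ℝ} {A X : En n → Mat n}
    (hA : ∀ μ ν, IsSymbol k p fun y => A y μ ν) (hX : ∀ μ ν, IsSymbol k q fun y => X y μ ν)
    (μ ν : Fin n) : IsSymbol k (p + q) fun y => brkt (A y) (X y) μ ν :=
  .sum fun _ _ => ((hA _ _).mul (hX _ _)).sub (((hX _ _).mul (hA _ _)).congr_order (add_comm q p))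

theorem isSymbol_norm_sq (k : ℕ) : IsSymbol k 1 fun y : En n => ‖y‖ ^ 2 := by
  simp_rw [← sum_coord_sq, sq]
  exact .sum fun i _ => ((IsSymbol.coord i).mul (.coord i)).congr_order (by norm_num)

/-- The first-order coefficients of the eigenvalue equation written as a system. -/
noncomputable def eigenDrift (a : Fin n × Fin n × Fin n) (i : Fin n) (b : Fin n × Fin n × Fin n)
    (y : En n) : ℝ :=
  if a.1 = b.1 then -2 * adMatrix (Wc i y) a.2 b.2 else 0

/-- The zeroth-order coefficients of the eigenvalue equation written as a system. -/
noncomputable def eigenPotential (a b : Fin n × Fin n × Fin n) (y : En n) : ℝ :=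
  (if a.1 = b.1 then -1 * ∑ i, ∑ r, adMatrix (Wc i y) a.2 r * adMatrix (Wc i y) r b.2 else 0)
    + 2 * adMatrix (Fc b.1 a.1 y) a.2 b.2

/-- The scalar entries of a tuple of matrix fields. -/
def entries (ξ : En n → Fin n → Mat n) (a : Fin n × Fin n × Fin n) (y : En n) : ℝ :=
  ξ y a.1 a.2.1 a.2.2

theorem contDiff_entries {ξ : En n → Fin n → Mat n} (hs : ContDiff ℝ ∞ ξ)
    (a : Fin n × Fin n × Fin n) : ContDiff ℝ ∞ (entries ξ a) :=
  contDiff_pi.1 (contDiff_pi.1 (contDiff_pi.1 hs a.1) a.2.1) a.2.2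

theorem normSq_entries (ξ : En n → Fin n → Mat n) (y : En n) :
    normSq (entries ξ) y = tnormSq (ξ y) := by
  simp only [normSq, entries, tnormSq, fipE, Fintype.sum_prod_type, sq]

theorem sum_eigenDrift_mul (ξ : En n → Fin n → Mat n) (j : Fin n) (p : Fin n × Fin n)
    (y : En n) :
    ∑ i, ∑ b, eigenDrift (j, p) i b y * pder i (entries ξ b) y
      = -2 * ∑ i, brkt (Wc i y) (pderM i (fun z => ξ z j) y) p.1 p.2 := by
  simp only [eigenDrift, ite_mul, zero_mul, Fintype.sum_prod_type (α₁ := Fin n)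
    (α₂ := Fin n × Fin n), sum_sum_ite_eq, brkt_eq_sum_adMatrix, Finset.mul_sum, mul_assoc]
  rfl

theorem sum_eigenPotential_mul (ξ : En n → Fin n → Mat n) (j : Fin n) (p : Fin n × Fin n)
    (y : En n) :
    ∑ b, eigenPotential (j, p) b y * entries ξ b y
      = -∑ i, brkt (Wc i y) (brkt (Wc i y) (ξ y j)) p.1 p.2
        - 2 * ∑ i, brkt (ξ y i) (Fc i j y) p.1 p.2 := by
  have hquad : ∑ b : Fin n × Fin n × Fin n, (if j = b.1 then -1 * ∑ i, ∑ r,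
        adMatrix (Wc i y) p r * adMatrix (Wc i y) r b.2 else 0) * entries ξ b y
      = -∑ i, brkt (Wc i y) (brkt (Wc i y) (ξ y j)) p.1 p.2 := by
    simp only [ite_mul, zero_mul, Fintype.sum_prod_type (α₁ := Fin n) (α₂ := Fin n × Fin n),
      sum_sum_ite_eq, brkt_brkt_eq_sum_adMatrix, neg_mul, one_mul, Finset.sum_neg_distrib]
    rw [Finset.sum_comm]
    simp only [Finset.sum_mul, entries]
  have hcurv : ∑ b : Fin n × Fin n × Fin n, 2 * adMatrix (Fc b.1 j y) p b.2 * entries ξ b y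
      = -(2 * ∑ i, brkt (ξ y i) (Fc i j y) p.1 p.2) := by
    simp only [brkt_swap (Fc _ _ _), brkt_eq_sum_adMatrix, Finset.sum_neg_distrib, Finset.mul_sum,
      Fintype.sum_prod_type (α₁ := Fin n) (α₂ := Fin n × Fin n), mul_neg, neg_neg, mul_assoc]
    rfl
  simp only [eigenPotential, add_mul, Finset.sum_add_distrib, hquad, hcurv]
  ring

variable (hn : 5 ≤ n) (hn' : n ≤ 9)
include hn hn'

theorem isSymbol_Wc (k : ℕ) (i μ ν : Fin n) : IsSymbol k (-1 / 2) fun y : En n => Wc i y μ ν := by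
  have hinv : IsSymbol k (-1) fun y : En n => (aC n * ‖y‖ ^ 2 + bC n)⁻¹ := by
    refine (((isSymbol_norm_sq k).const_smul (aC n)).add (.const (bC n) zero_le_one)).inv
      (lt_min (aC_pos hn) (bC_pos hn hn')) fun y => ?_
    have ha := mul_le_mul_of_nonneg_right (min_le_left (aC n) (bC n)) (sq_nonneg ‖y‖)
    have hb := min_le_right (aC n) (bC n)
    rw [rpow_one, tau, smul_eq_mul]
    linarith
  have hsigma : IsSymbol k (1 / 2) fun y : En n => sigmaM i y μ ν :=
    (IsSymbol.coord μ).ite.sub (IsSymbol.coord ν).ite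
  simpa only [Wc, div_eq_mul_inv] using (hsigma.mul hinv).congr_order (by norm_num)

theorem isSymbol_Fc (k : ℕ) (i j μ ν : Fin n) :
    IsSymbol k (-1) fun y : En n => Fc i j y μ ν := by
  have hder (i j : Fin n) : IsSymbol k (-1) fun y : En n => pderM i (Wc j) y μ ν :=
    ((isSymbol_Wc hn hn' (k + 1) j μ ν).pder i).congr_order (by norm_num)
  have hbrkt : IsSymbol k (-1) fun y : En n => brkt (Wc i y) (Wc j y) μ ν :=
    (IsSymbol.brkt (isSymbol_Wc hn hn' k i) (isSymbol_Wc hn hn' k j) μ ν).congr_order (by norm_num)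
  exact ((hder i j).sub (hder j i)).add hbrkt

theorem driftSystem_entries {ξ : En n → Fin n → Mat n} {lam : ℝ} (k : ℕ)
    (hs : ContDiff ℝ ∞ ξ) (heig : ∀ (y : En n) (j : Fin n), Lop ξ y j = (-lam) • ξ y j) :
    DriftSystem k (lam - 1 / 2) (entries ξ) eigenDrift eigenPotential fun _ _ => 0 where
  contDiff := contDiff_entries hs
  drift a i b := ((IsSymbol.adMatrix (isSymbol_Wc hn hn' k i) a.2 b.2).const_smul (-2)).ite
  potential a b := by
    have hquad (i : Fin n) (r : Fin n × Fin n) :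
        IsSymbol k (-1) fun y : En n => adMatrix (Wc i y) a.2 r * adMatrix (Wc i y) r b.2 :=
      ((IsSymbol.adMatrix (isSymbol_Wc hn hn' k i) a.2 r).mul
        (.adMatrix (isSymbol_Wc hn hn' k i) r b.2)).congr_order (by norm_num)
    exact ((IsSymbol.sum fun i _ => .sum fun r _ => hquad i r).const_smul (-1)).ite.add
      ((IsSymbol.adMatrix (isSymbol_Fc hn hn' k b.1 a.1) a.2 b.2).const_smul 2)
  source _ := .zero
  eq := by
    rintro ⟨j, p⟩ y
    have h := congrFun (congrFun (heig y j) p.1) p.2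
    simp only [Lop, Pi.add_apply, Pi.sub_apply, Pi.smul_apply, Finset.sum_apply, smul_eq_mul] at h
    have hlap : lapM (fun z => ξ z j) y p.1 p.2 = lapS (entries ξ (j, p)) y := rfl
    have hpder (i : Fin n) : pderM i (fun z => ξ z j) y p.1 p.2 = pder i (entries ξ (j, p)) y := rfl
    have hval : ξ y j p.1 p.2 = entries ξ (j, p) y := rfl
    rw [lowerOrder, sum_eigenDrift_mul, sum_eigenPotential_mul, driftLap]
    simp only [hlap, hpder, hval] at h
    linarith

end EigenSystem

section PolynomialWeights

variable {E : Type*} [NormedAddCommGroup E]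

theorem rpow_le_rpow_abs_mul_rpow {s t A : ℝ} (hs : 0 < s) (ht : 0 < t) (hA : 0 < A)
    (hst : s ≤ A * t) (hts : t ≤ A * s) (q : ℝ) : s ^ q ≤ A ^ |q| * t ^ q := by
  rcases le_or_gt 0 q with hq | hq
  · rw [abs_of_nonneg hq, ← mul_rpow hA.le ht.le]
    exact rpow_le_rpow hs.le hst hq
  · have hts' : A⁻¹ * t ≤ s := (inv_mul_le_iff₀ hA).2 hts
    refine (rpow_le_rpow_of_nonpos (by positivity) hts' hq.le).trans_eq ?_
    rw [abs_of_neg hq, mul_rpow (inv_nonneg.2 hA.le) ht.le, inv_rpow hA.le, rpow_neg hA.le]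

theorem one_le_max_one_norm (y : E) : 1 ≤ max 1 ‖y‖ := le_max_left _ _

theorem tau_rpow_le_max_rpow (q : ℝ) (y : E) : tau y ^ q ≤ 2 ^ |q| * max 1 ‖y‖ ^ (2 * q) := by
  have hr := one_le_max_one_norm y
  have hy : ‖y‖ ^ 2 ≤ max 1 ‖y‖ ^ 2 := pow_le_pow_left₀ (norm_nonneg y) (le_max_right _ _) 2
  have hupper : tau y ≤ 2 * max 1 ‖y‖ ^ 2 := by
    rw [tau]
    linarith [one_le_pow₀ (n := 2) hr]
  have hlower : max 1 ‖y‖ ^ 2 ≤ 2 * tau y := by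
    rw [tau]
    rcases max_cases 1 ‖y‖ with h | h <;> rw [h.1] <;> nlinarith [sq_nonneg ‖y‖]
  rw [rpow_mul (by positivity), rpow_two]
  exact rpow_le_rpow_abs_mul_rpow (tau_pos y) (by positivity) two_pos hupper hlower q

theorem max_one_norm_le_of_mem_ball {x y : E} (hx : x ∈ ball y 1) :
    max 1 ‖x‖ ≤ 2 * max 1 ‖y‖ := by
  have hxy := norm_le_norm_add_norm_sub' x y
  rw [mem_ball, dist_eq_norm] at hx
  exact max_le (by linarith [one_le_max_one_norm y])
    (by linarith [one_le_max_one_norm y, le_max_right 1 ‖y‖])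

theorem max_one_norm_rpow_le_of_mem_ball {x y : E} (hx : x ∈ ball y 1) (q : ℝ) :
    max 1 ‖x‖ ^ q ≤ 2 ^ |q| * max 1 ‖y‖ ^ q :=
  rpow_le_rpow_abs_mul_rpow (by positivity) (by positivity) two_pos
    (max_one_norm_le_of_mem_ball hx) (max_one_norm_le_of_mem_ball (mem_ball_comm.1 hx)) q

theorem le_two_mul_rpow {t α : ℝ} (ht0 : 0 ≤ t) (ht : t ≤ 2) (hα : 0 ≤ α) (hα1 : α ≤ 1) :
    t ≤ 2 * t ^ α := by
  have hpow : t ^ (1 - α) ≤ 2 :=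
    (rpow_le_rpow ht0 ht (sub_nonneg.2 hα1)).trans
      ((rpow_le_rpow_of_exponent_le one_le_two (sub_le_self 1 hα)).trans_eq (rpow_one 2))
  calc t = t ^ (1 - α) * t ^ α := by rw [← rpow_add' ht0 (by simp), sub_add_cancel, rpow_one]
    _ ≤ 2 * t ^ α := mul_le_mul_of_nonneg_right hpow (rpow_nonneg ht0 α)

namespace IsSymbol

variable [NormedSpace ℝ E] {F : Type*} [NormedAddCommGroup F] [NormedSpace ℝ F] {k m : ℕ} {p : ℝ}
  {f : E → F}

theorem exists_norm_iteratedFDeriv_le_max (hf : IsSymbol k p f) (hm : m ≤ k) {q : ℝ}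
    (hq : q = 2 * p - m) :
    ∃ C : ℝ, 0 ≤ C ∧ ∀ y, ‖iteratedFDeriv ℝ m f y‖ ≤ C * max 1 ‖y‖ ^ q := by
  obtain ⟨C, hC0, hC⟩ := hf.exists_norm_iteratedFDeriv_le hm
  refine ⟨C * 2 ^ |p - m / 2|, by positivity, fun y => (hC y).trans ?_⟩
  rw [mul_assoc, show q = 2 * (p - m / 2) by rw [hq]; ring]
  exact mul_le_mul_of_nonneg_left (tau_rpow_le_max_rpow _ y) hC0

theorem exists_norm_iteratedFDeriv_sub_le (hf : IsSymbol k p f) (hm : m + 1 ≤ k) {q α : ℝ}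
    (hα : 0 ≤ α) (hα1 : α ≤ 1) (hq : q = 2 * p - m - α) :
    ∃ C : ℝ, 0 ≤ C ∧ ∀ y, ∀ z ∈ ball y 1, ∀ w ∈ ball y 1,
      ‖iteratedFDeriv ℝ m f z - iteratedFDeriv ℝ m f w‖
        ≤ C * max 1 ‖y‖ ^ q * ‖z - w‖ ^ α := by
  set r := 2 * p - (m + 1 : ℕ) with hr
  obtain ⟨C, hC0, hC⟩ := hf.exists_norm_iteratedFDeriv_le_max hm hr
  refine ⟨C * 2 ^ |r| * 2, by positivity, fun y z hz w hw => ?_⟩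
  have hdiff : Differentiable ℝ (iteratedFDeriv ℝ m f) :=
    hf.contDiff.differentiable_iteratedFDeriv (WithTop.coe_lt_coe.2 (ENat.natCast_lt_top m))
  have hbound : ∀ x ∈ ball y 1, ‖_root_.fderiv ℝ (iteratedFDeriv ℝ m f) x‖
      ≤ C * 2 ^ |r| * max 1 ‖y‖ ^ r := fun x hx => by
    rw [norm_fderiv_iteratedFDeriv, mul_assoc]
    exact (hC x).trans (mul_le_mul_of_nonneg_left (max_one_norm_rpow_le_of_mem_ball hx r) hC0)
  have hzw : ‖z - w‖ ≤ 2 := by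
    rw [← dist_eq_norm]
    linarith [dist_triangle_right z w y, mem_ball.1 hz, mem_ball.1 hw]
  have hrq : max 1 ‖y‖ ^ r ≤ max 1 ‖y‖ ^ q := by
    refine rpow_le_rpow_of_exponent_le (one_le_max_one_norm y) ?_
    rw [hr, hq]
    push_cast
    linarith
  calc ‖iteratedFDeriv ℝ m f z - iteratedFDeriv ℝ m f w‖
      ≤ C * 2 ^ |r| * max 1 ‖y‖ ^ r * ‖z - w‖ :=
        (convex_ball y 1).norm_image_sub_le_of_norm_fderiv_le (fun x _ => hdiff x) hbound hw hz
    _ ≤ C * 2 ^ |r| * max 1 ‖y‖ ^ q * (2 * ‖z - w‖ ^ α) := by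
        gcongr
        exact le_two_mul_rpow (norm_nonneg _) hzw hα hα1
    _ = C * 2 ^ |r| * 2 * max 1 ‖y‖ ^ q * ‖z - w‖ ^ α := by ring

end IsSymbol

end PolynomialWeights

section Eigenfunction

variable {n : ℕ} {ξ : En n → Fin n → Mat n}

theorem continuous_gauss : Continuous fun y : En n => gauss y := by
  unfold gauss
  fun_prop

theorem fipE_self_nonneg (A : Mat n) : 0 ≤ fipE A A :=
  Finset.sum_nonneg fun _ _ => Finset.sum_nonneg fun _ _ => mul_self_nonneg _

theorem integrable_tnormSq_mul_gauss {G : En n → ℝ} (hs : ContDiff ℝ ∞ ξ) (hG : ∀ y, 0 ≤ G y)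
    (hint : Integrable fun y => (tnormSq (ξ y) + G y) * gauss y) :
    Integrable fun y => tnormSq (ξ y) * gauss y := by
  have hcont : Continuous fun y => tnormSq (ξ y) := by
    simp only [← normSq_entries]
    exact (contDiff_normSq (contDiff_entries hs)).continuous
  refine hint.mono' (hcont.mul continuous_gauss).aestronglyMeasurable (.of_forall fun y => ?_)
  have hgauss : 0 ≤ gauss y := (exp_pos _).le
  have hnorm : 0 ≤ tnormSq (ξ y) := normSq_entries ξ y ▸ normSq_nonneg _ y
  rw [norm_of_nonneg (mul_nonneg hnorm hgauss)]
  exact mul_le_mul_of_nonneg_right (le_add_of_nonneg_right (hG y)) hgauss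

variable (hn : 5 ≤ n) (hn' : n ≤ 9) {lam : ℝ} (hs : ContDiff ℝ ∞ ξ)
  (heig : ∀ (y : En n) (j : Fin n), Lop ξ y j = (-lam) • ξ y j)
  (hint : Integrable fun y => tnormSq (ξ y) * gauss y)
include hn hn' hs heig hint

theorem exists_sqrt_tnormSq_le_max : ∃ C : ℝ, 0 ≤ C ∧
    ∀ y, √(tnormSq (ξ y)) ≤ C * max 1 ‖y‖ ^ (2 * lam - 1) := by
  have hsys := driftSystem_entries hn hn' 0 hs heig
  simp only [← normSq_entries] at hint ⊢
  obtain ⟨A, hA⟩ := hsys.exists_sqrt_normSq_le_exp hint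
  obtain ⟨M, hM⟩ := hsys.exists_sqrt_normSq_le (by norm_num) hA
  refine ⟨|M| * 2 ^ |lam - 1 / 2|, by positivity, fun y => (hM y).trans ?_⟩
  calc M * tau y ^ (lam - 1 / 2)
      ≤ |M| * (2 ^ |lam - 1 / 2| * max 1 ‖y‖ ^ (2 * (lam - 1 / 2))) :=
        mul_le_mul (le_abs_self M) (tau_rpow_le_max_rpow _ y) (tau_rpow_pos _ y).le (abs_nonneg M)
    _ = _ := by rw [mul_assoc, show 2 * (lam - 1 / 2) = 2 * lam - 1 by ring]

theorem isSymbol_eigenfunction (k : ℕ) : IsSymbol k (lam - 1 / 2) ξ := by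
  have hsys := driftSystem_entries hn hn' k hs heig
  simp only [← normSq_entries] at hint
  obtain ⟨A, hA⟩ := hsys.exists_sqrt_normSq_le_exp hint
  exact .pi fun j => .pi fun μ => .pi fun ν => hsys.isSymbol (by norm_num) hA (j, μ, ν)

end Eigenfunction

theorem eigenfunction_weighted_C2_bound_general (n : ℕ) (hn : 5 ≤ n) (hn' : n ≤ 9)
    (lam : ℝ) (ξ : En n → Fin n → Mat n) (hs : ContDiff ℝ ∞ ξ)
    (heig : ∀ (y : En n) (j : Fin n), Lop ξ y j = (-lam) • ξ y j)
    (hint : Integrable fun y : En n => tnormSq (ξ y) * gauss y)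
    (α : ℝ) (hα : 0 ≤ α) (hα1 : α ≤ 1) :
    ∃ C : ℝ, ∀ y : En n,
      √(tnormSq (ξ y)) ≤ C * (max 1 ‖y‖) ^ (2 * lam - 1) ∧
      ‖iteratedFDeriv ℝ 1 ξ y‖ ≤ C * (max 1 ‖y‖) ^ (2 * lam - 2) ∧
      ‖iteratedFDeriv ℝ 2 ξ y‖ ≤ C * (max 1 ‖y‖) ^ (2 * lam - 3) ∧
      ∀ z ∈ ball y 1, ∀ w ∈ ball y 1,
        ‖iteratedFDeriv ℝ 2 ξ z - iteratedFDeriv ℝ 2 ξ w‖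
          ≤ C * (max 1 ‖y‖) ^ (2 * lam - 3 - α) * ‖z - w‖ ^ α := by
  have hsymbol := isSymbol_eigenfunction hn hn' hs heig hint 3
  obtain ⟨C₀, hC₀, h₀⟩ := exists_sqrt_tnormSq_le_max hn hn' hs heig hint
  obtain ⟨C₁, hC₁, h₁⟩ := hsymbol.exists_norm_iteratedFDeriv_le_max (m := 1) (by norm_num)
    (q := 2 * lam - 2) (by push_cast; ring)
  obtain ⟨C₂, hC₂, h₂⟩ := hsymbol.exists_norm_iteratedFDeriv_le_max (m := 2) (by norm_num)
    (q := 2 * lam - 3) (by push_cast; ring)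
  obtain ⟨C₃, hC₃, h₃⟩ := hsymbol.exists_norm_iteratedFDeriv_sub_le (m := 2) le_rfl hα hα1
    (q := 2 * lam - 3 - α) (by push_cast; ring)
  refine ⟨C₀ + C₁ + C₂ + C₃, fun y => ⟨(h₀ y).trans ?_, (h₁ y).trans ?_, (h₂ y).trans ?_,
    fun z hz w hw => (h₃ y z hz w hw).trans ?_⟩⟩ <;> gcongr <;> linarith

open MeasureTheory in
/-- Weighted `C²` bound for eigenfunctions of the linearized operator: if `ξ` is smooth,
skew-valued, satisfies `−Lξ = λξ` pointwise and lies in the Gaussian-weighted `H¹` space, then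
for every `α ∈ (0,1)` there is a constant `C` such that, with `r̃(y) = max(1,|y|)`:
`‖ξ(y)‖_F ≤ C·r̃^{2λ−1}`, `‖∇ξ(y)‖ ≤ C·r̃^{2λ−2}`, `‖∇²ξ(y)‖ ≤ C·r̃^{2λ−3}`, and the `α`-Hölder
seminorm of `∇²ξ` on the unit ball around `y` is at most `C·r̃^{2λ−3−α}`. -/
theorem eigenfunction_weighted_C2_bound (n : ℕ) (hn : 5 ≤ n) (hn' : n ≤ 9)
    (lam : ℝ) (ξ : En n → Fin n → Mat n)
    (hs : ContDiff ℝ (⊤ : ℕ∞) ξ) (hskew : ∀ y j, skewM (ξ y j))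
    (heig : ∀ (y : En n) (j : Fin n), Lop ξ y j = (-lam) • ξ y j)
    (hint : Integrable (fun y : En n =>
      (tnormSq (ξ y) +
        ∑ i, ∑ j, fipE (pderM i (fun z => ξ z j) y) (pderM i (fun z => ξ z j) y)) * gauss y))
    (α : ℝ) (hα : 0 < α) (hα1 : α < 1) :
    ∃ C : ℝ, ∀ y : En n,
      Real.sqrt (tnormSq (ξ y)) ≤ C * (max 1 ‖y‖) ^ (2 * lam - 1) ∧
      ‖iteratedFDeriv ℝ 1 ξ y‖ ≤ C * (max 1 ‖y‖) ^ (2 * lam - 2) ∧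
      ‖iteratedFDeriv ℝ 2 ξ y‖ ≤ C * (max 1 ‖y‖) ^ (2 * lam - 3) ∧
      ∀ z ∈ Metric.ball y 1, ∀ w ∈ Metric.ball y 1,
        ‖iteratedFDeriv ℝ 2 ξ z - iteratedFDeriv ℝ 2 ξ w‖
          ≤ C * (max 1 ‖y‖) ^ (2 * lam - 3 - α) * ‖z - w‖ ^ α :=
  eigenfunction_weighted_C2_bound_general n hn hn' lam ξ hs heig
    (integrable_tnormSq_mul_gauss hs (fun _ => Finset.sum_nonneg fun _ _ =>
      Finset.sum_nonneg fun _ _ => fipE_self_nonneg _) hint) α hα.le hα1.le
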